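/- arXiv:0711.3488 — 5 statements merged into one kernel-verified Lean document; each statement's English description precedes it below -/
import Mathlib

section
/- Every graph G of order n with μ(G) > μ(T_r(n)) contains a clique of order r+1. -/
/-!
The largest eigenvalue `μ(G)` is the maximum of the quadratic form
`∑ u, ∑ v, [u ~ v] x u x v` relative to `∑ v, x v ^ 2`, and it is attained at a nonnegative vector
(take absolute values in an eigenvector). The proof compares these forms.

* **Weighted Erdős majorization** (`exists_coloring_majorant`). If `G` has no `(r + 1)`-clique and
  `x ≥ 0`, some complete `r`-partite graph on the same vertices has at least as large a form at `x`.
  By induction on `r`: pick a vertex maximizing the `x`-weight of its neighbourhood `N`, apply the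
  induction hypothesis to `N`, and make the complement of `N` a new class joined to all of `N`.

* **Complete multipartite graphs** (`multipartite_form_le`, `sum_div_le_one`). If the classes have
  sizes `kᵢ` and `x` has sums `Sᵢ` on them, the form is `(∑ Sᵢ)² - ∑ Sᵢ²`, and by Cauchy–Schwarz it
  is at most `m ∑ x²` as soon as `∑ kᵢ / (kᵢ + m) ≤ 1`. Conversely, if `m` bounds the form, testing
  it at the vector equal to `1 / (kᵢ + m)` on the `i`-th class gives `∑ kᵢ / (kᵢ + m) ≤ 1`.

* **Balancing** (`sum_div_le_of_balanced`). As `k ↦ k / (k + m)` is concave,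
  `∑ kᵢ / (kᵢ + m)` is largest for balanced class sizes, that is for the Turán graph. With
  `m = μ(T_r(n))` the two previous items then bound `μ(G)` by `m`.
-/


/-- The largest adjacency eigenvalue of a finite simple graph. -/
noncomputable def SimpleGraph.specMax {V : Type*} [Fintype V] [DecidableEq V]
    (G : SimpleGraph V) : ℝ :=
  letI := Classical.decRel G.Adj
  ⨆ i, (Matrix.IsHermitian.eigenvalues
    (A := G.adjMatrix ℝ)
    (by rw [Matrix.IsHermitian, Matrix.conjTranspose_eq_transpose_of_trivial]
        exact SimpleGraph.isSymm_adjMatrix G)) i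

open Finset

open scoped Classical in
/-- The adjacency quadratic form `∑ u, ∑ v, [u ~ v] x u x v`; each edge is counted twice. -/
noncomputable def adjForm {V : Type*} [Fintype V] (G : SimpleGraph V) (x : V → ℝ) : ℝ :=
  ∑ u, ∑ v, if G.Adj u v then x u * x v else 0

/-! ### The largest eigenvalue and the quadratic form -/

lemma adjForm_le_specMax {V : Type*} [Fintype V] [DecidableEq V] (G : SimpleGraph V)
    (x : V → ℝ) : adjForm G x ≤ G.specMax * ∑ v, x v ^ 2 := by
  classical
  let := Classical.decRel G.Adj
  have hA : (G.adjMatrix ℝ).IsHermitian := by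
    rw [Matrix.IsHermitian, Matrix.conjTranspose_eq_transpose_of_trivial]
    exact SimpleGraph.isSymm_adjMatrix G
  have hS : G.specMax = ⨆ i, hA.eigenvalues i := rfl
  have hle : ∀ i, hA.eigenvalues i ≤ G.specMax := fun i => by
    rw [hS]; exact le_ciSup (Set.finite_range _).bddAbove i
  have hQ : adjForm G x = x ⬝ᵥ (G.adjMatrix ℝ).mulVec x := by
    simp only [adjForm, dotProduct, Matrix.mulVec, mul_sum, SimpleGraph.adjMatrix_apply]
    refine sum_congr rfl fun u _ => sum_congr rfl fun v _ => ?_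
    split_ifs <;> simp
  let b := hA.eigenvectorBasis
  let X : EuclideanSpace ℝ V := WithLp.toLp 2 x
  let Y : EuclideanSpace ℝ V := WithLp.toLp 2 ((G.adjMatrix ℝ).mulVec x)
  have h1 : ∀ i, inner ℝ (b i) Y = hA.eigenvalues i * inner ℝ (b i) X := by
    intro i
    have hT : (G.adjMatrix ℝ).vecMul ⇑(b i) = (G.adjMatrix ℝ).mulVec ⇑(b i) := by
      rw [← Matrix.vecMul_transpose, SimpleGraph.transpose_adjMatrix]
    have e1 : inner ℝ (b i) Y = ⇑(b i) ⬝ᵥ (G.adjMatrix ℝ).mulVec x := by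
      rw [EuclideanSpace.inner_eq_star_dotProduct]; simp [Y, dotProduct_comm]
    have e2 : inner ℝ (b i) X = ⇑(b i) ⬝ᵥ x := by
      rw [EuclideanSpace.inner_eq_star_dotProduct]; simp [X, dotProduct_comm]
    rw [e1, e2, Matrix.dotProduct_mulVec, hT, hA.mulVec_eigenvectorBasis, smul_dotProduct,
      smul_eq_mul]
  have h2 : x ⬝ᵥ (G.adjMatrix ℝ).mulVec x = inner ℝ X Y := by
    rw [EuclideanSpace.inner_eq_star_dotProduct]; simp [X, Y, dotProduct_comm]
  have h3 : ∑ v, x v ^ 2 = inner ℝ X X := by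
    rw [EuclideanSpace.inner_eq_star_dotProduct]; simp [X, dotProduct, sq]
  rw [hQ, h2, h3, ← b.sum_inner_mul_inner X Y, ← b.sum_inner_mul_inner X X, mul_sum]
  refine sum_le_sum fun i _ => ?_
  rw [h1, real_inner_comm X (b i)]
  nlinarith [mul_le_mul_of_nonneg_right (hle i) (sq_nonneg (inner ℝ X (b i)))]

lemma exists_specMax_le_adjForm {V : Type*} [Fintype V] [DecidableEq V] [Nonempty V]
    (G : SimpleGraph V) :
    ∃ x : V → ℝ, (∀ v, 0 ≤ x v) ∧ 0 < ∑ v, x v ^ 2 ∧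
      G.specMax * ∑ v, x v ^ 2 ≤ adjForm G x := by
  classical
  let := Classical.decRel G.Adj
  have hA : (G.adjMatrix ℝ).IsHermitian := by
    rw [Matrix.IsHermitian, Matrix.conjTranspose_eq_transpose_of_trivial]
    exact SimpleGraph.isSymm_adjMatrix G
  have hS : G.specMax = ⨆ i, hA.eigenvalues i := rfl
  obtain ⟨i, hi⟩ := exists_eq_ciSup_of_finite (f := hA.eigenvalues)
  rw [← hS] at hi
  let y : V → ℝ := ⇑(hA.eigenvectorBasis i)
  have hy : ∑ v, y v ^ 2 = 1 := by
    have := hA.eigenvectorBasis.orthonormal.1 i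
    rw [EuclideanSpace.norm_eq, Real.sqrt_eq_one] at this
    simpa [y] using this
  refine ⟨fun v => |y v|, fun v => abs_nonneg _, by simp [hy], ?_⟩
  have h1 : G.specMax * ∑ v, y v ^ 2 = y ⬝ᵥ (G.adjMatrix ℝ).mulVec y := by
    have := hA.mulVec_eigenvectorBasis i
    change (G.adjMatrix ℝ).mulVec y = _ • y at this
    rw [this, hi, dotProduct_smul, smul_eq_mul]
    simp [dotProduct, sq]
  simp only [sq_abs]
  rw [h1]
  simp only [adjForm, dotProduct, Matrix.mulVec, mul_sum, SimpleGraph.adjMatrix_apply]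
  refine sum_le_sum fun u _ => sum_le_sum fun v _ => ?_
  split_ifs
  · simpa [abs_mul] using le_abs_self (y u * y v)
  · simp

/-! ### Majorization by a complete multipartite graph -/

open scoped Classical in
/-- The colour classes of `c` are the parts of the majorizing complete `r`-partite graph. The
statement is about an arbitrary vertex set `S` so that the induction on `r` can pass to the
neighbourhood of a vertex. -/
lemma exists_coloring_majorant {V : Type*} (G : SimpleGraph V) (x : V → ℝ) (hx : ∀ v, 0 ≤ x v)
    (r : ℕ) : ∀ S : Finset V, G.CliqueFreeOn (S : Set V) (r + 1) →
      ∃ c : V → ℕ, (∀ v ∈ S, c v < r) ∧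
        ∑ u ∈ S, ∑ v ∈ S, (if G.Adj u v then x u * x v else 0) ≤
          ∑ u ∈ S, ∑ v ∈ S, (if c u ≠ c v then x u * x v else 0) := by
  induction r with
  | zero =>
    intro S hS
    have : S = ∅ := by
      rw [eq_empty_iff_forall_notMem]
      intro v hv
      exact hS (t := {v}) (by simpa using hv) (by simp [SimpleGraph.isNClique_iff])
    subst this
    exact ⟨fun _ => 0, by simp, by simp⟩
  | succ r ih =>
    intro S hS
    rcases S.eq_empty_or_nonempty with rfl | hne
    · exact ⟨fun _ => 0, by simp, by simp⟩
    let s : V → ℝ := fun u => ∑ w ∈ S, if G.Adj u w then x w else 0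
    obtain ⟨v, hv, hmax⟩ := S.exists_max_image s hne
    set N := S.filter (fun w => G.Adj v w) with hN
    set T := S.filter (fun w => ¬ G.Adj v w) with hT
    have hNfree : G.CliqueFreeOn (N : Set V) (r + 1) := by
      have h := SimpleGraph.CliqueFreeOn.of_succ G (n := r + 1) hS (mem_coe.2 hv)
      convert h using 1
      ext w
      simp [hN]
    obtain ⟨c', hc', hle⟩ := ih N hNfree
    let c : V → ℕ := fun w => if G.Adj v w then c' w else r
    have hcN : ∀ w ∈ N, c w = c' w := fun w hw => by
      simp [c, (mem_filter.1 hw).2]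
    have hcT : ∀ w ∈ T, c w = r := fun w hw => by
      simp [c, (mem_filter.1 hw).2]
    have split (f : V → ℝ) : ∑ w ∈ S, f w = ∑ w ∈ N, f w + ∑ w ∈ T, f w :=
      (sum_filter_add_sum_filter_not S _ f).symm
    refine ⟨c, fun w hw => ?_, ?_⟩
    · by_cases h : G.Adj v w
      · have := hc' w (mem_filter.2 ⟨hw, h⟩)
        simp only [c, h, if_true]; omega
      · simp [c, h]
    set xN := ∑ w ∈ N, x w
    set xT := ∑ w ∈ T, x w
    have hsv : s v = xN := by simp [s, xN, hN, sum_filter]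
    -- Edges meeting `T`, counted from their endpoint in `T`: maximality of `s v` bounds their weight.
    have hTS : ∑ u ∈ T, ∑ w ∈ S, (if G.Adj u w then x u * x w else 0) ≤ xT * xN := by
      rw [sum_mul]
      refine sum_le_sum fun u hu => ?_
      have : ∑ w ∈ S, (if G.Adj u w then x u * x w else 0) = x u * s u := by
        simp only [s, mul_sum, mul_ite, mul_zero]
      rw [this]
      exact mul_le_mul_of_nonneg_left ((hmax u (mem_filter.1 hu).1).trans hsv.le) (hx u)
    have hNT : ∑ u ∈ N, ∑ w ∈ T, (if G.Adj u w then x u * x w else 0) ≤ xT * xN := by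
      rw [sum_comm]
      refine le_trans (sum_le_sum fun u hu => ?_) hTS
      simp only [G.adj_comm _ u, mul_comm _ (x u)]
      refine sum_le_sum_of_subset_of_nonneg (filter_subset _ _) fun w _ _ => ?_
      split_ifs
      · exact mul_nonneg (hx _) (hx _)
      · exact le_rfl
    have hL : ∑ u ∈ S, ∑ w ∈ S, (if G.Adj u w then x u * x w else 0) ≤
        ∑ u ∈ N, ∑ w ∈ N, (if G.Adj u w then x u * x w else 0) + 2 * (xT * xN) := by
      rw [split]
      have : ∑ u ∈ N, ∑ w ∈ S, (if G.Adj u w then x u * x w else 0) =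
          ∑ u ∈ N, ∑ w ∈ N, (if G.Adj u w then x u * x w else 0) +
          ∑ u ∈ N, ∑ w ∈ T, (if G.Adj u w then x u * x w else 0) := by
        rw [← sum_add_distrib]
        exact sum_congr rfl fun u _ => split _
      linarith
    have hR : ∑ u ∈ S, ∑ w ∈ S, (if c u ≠ c w then x u * x w else 0) =
        ∑ u ∈ N, ∑ w ∈ N, (if c' u ≠ c' w then x u * x w else 0) + 2 * (xT * xN) := by
      rw [split, sum_congr rfl fun u _ => split _, sum_add_distrib,
        sum_congr (s₁ := T) rfl fun u _ => split _, sum_add_distrib]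
      have e1 : ∑ u ∈ N, ∑ w ∈ N, (if c u ≠ c w then x u * x w else 0) =
          ∑ u ∈ N, ∑ w ∈ N, (if c' u ≠ c' w then x u * x w else 0) :=
        sum_congr rfl fun u hu => sum_congr rfl fun w hw => by rw [hcN u hu, hcN w hw]
      have e2 : ∑ u ∈ N, ∑ w ∈ T, (if c u ≠ c w then x u * x w else 0) = xN * xT := by
        rw [sum_mul_sum]
        refine sum_congr rfl fun u hu => sum_congr rfl fun w hw => ?_
        rw [hcN u hu, hcT w hw, if_pos (hc' u hu).ne]
      have e3 : ∑ u ∈ T, ∑ w ∈ N, (if c u ≠ c w then x u * x w else 0) = xT * xN := by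
        rw [sum_mul_sum]
        refine sum_congr rfl fun u hu => sum_congr rfl fun w hw => ?_
        rw [hcN w hw, hcT u hu, if_pos (hc' w hw).ne']
      have e4 : ∑ u ∈ T, ∑ w ∈ T, (if c u ≠ c w then x u * x w else 0) = 0 :=
        sum_eq_zero fun u hu => sum_eq_zero fun w hw => by rw [hcT u hu, hcT w hw]; simp
      rw [e1, e2, e3, e4]; ring
    linarith

/-! ### Quadratic forms of complete multipartite graphs -/

lemma multipartite_form_eq {V : Type*} [Fintype V] {r : ℕ} (c : V → ℕ) (hc : ∀ v, c v < r)
    (x : V → ℝ) :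
    ∑ u, ∑ v, (if c u ≠ c v then x u * x v else 0) =
      (∑ i ∈ range r, ∑ v with c v = i, x v) ^ 2 -
        ∑ i ∈ range r, (∑ v with c v = i, x v) ^ 2 := by
  have hm : ∀ v ∈ (univ : Finset V), c v ∈ range r := fun v _ => mem_range.2 (hc v)
  have h1 : ∑ i ∈ range r, (∑ v with c v = i, x v) ^ 2 =
      ∑ u, ∑ v, if c u = c v then x u * x v else 0 := by
    rw [← sum_fiberwise_of_maps_to hm]
    refine sum_congr rfl fun i _ => ?_
    rw [sq, sum_mul_sum]
    refine sum_congr rfl fun u hu => ?_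
    rw [sum_filter]
    refine sum_congr rfl fun v _ => ?_
    simp only [(mem_filter.1 hu).2, eq_comm]
  rw [h1, sum_fiberwise_of_maps_to hm, sq, sum_mul_sum, ← sum_sub_distrib]
  refine sum_congr rfl fun u _ => ?_
  rw [← sum_sub_distrib]
  refine sum_congr rfl fun v _ => ?_
  by_cases h : c u = c v <;> simp [h]

lemma multipartite_form_le {V : Type*} [Fintype V] {r : ℕ} (c : V → ℕ) (hc : ∀ v, c v < r)
    (x : V → ℝ) {m : ℝ} (hm : 0 ≤ m)
    (h : ∑ i ∈ range r, (#{v | c v = i} : ℝ) / (#{v | c v = i} + m) ≤ 1) :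
    ∑ u, ∑ v, (if c u ≠ c v then x u * x v else 0) ≤ m * ∑ v, x v ^ 2 := by
  rw [multipartite_form_eq c hc]
  have hmaps : ∀ v ∈ (univ : Finset V), c v ∈ range r := fun v _ => mem_range.2 (hc v)
  have hcs := sum_sq_le_sum_mul_sum_of_sq_le_mul (range r)
    (r := fun i => ∑ v with c v = i, x v)
    (f := fun i => (#{v | c v = i} : ℝ) / (#{v | c v = i} + m))
    (g := fun i => (∑ v with c v = i, x v) ^ 2 + m * ∑ v with c v = i, x v ^ 2)
    (fun i _ => by positivity)
    (fun i _ => add_nonneg (sq_nonneg _) (mul_nonneg hm (sum_nonneg fun _ _ => sq_nonneg _)))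
    (fun i _ => by
      have hq := sq_sum_le_card_mul_sum_sq (s := univ.filter fun v => c v = i) (f := x)
      rcases Nat.eq_zero_or_pos (#{v | c v = i}) with h0 | hpos
      · rw [h0] at hq ⊢
        simpa using hq
      · have hpos' : (0 : ℝ) < #{v | c v = i} := by exact_mod_cast hpos
        rw [div_mul_eq_mul_div, le_div_iff₀ (by positivity)]
        nlinarith [mul_le_mul_of_nonneg_left hq hm])
  have hnn : 0 ≤ ∑ i ∈ range r,
      ((∑ v with c v = i, x v) ^ 2 + m * ∑ v with c v = i, x v ^ 2) :=
    sum_nonneg fun i _ =>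
      add_nonneg (sq_nonneg _) (mul_nonneg hm (sum_nonneg fun _ _ => sq_nonneg _))
  have h2 := hcs.trans (mul_le_of_le_one_left hnn h)
  rw [sum_add_distrib, ← mul_sum, sum_fiberwise_of_maps_to hmaps (fun v => x v ^ 2)] at h2
  linarith

/-- The converse of `multipartite_form_le`. -/
lemma sum_div_le_one {V : Type*} [Fintype V] {r : ℕ} (c : V → ℕ) (hc : ∀ v, c v < r)
    {m : ℝ} (hm : 0 ≤ m)
    (h : ∀ x : V → ℝ, ∑ u, ∑ v, (if c u ≠ c v then x u * x v else 0) ≤ m * ∑ v, x v ^ 2) :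
    ∑ i ∈ range r, (#{v | c v = i} : ℝ) / (#{v | c v = i} + m) ≤ 1 := by
  have hmaps : ∀ v ∈ (univ : Finset V), c v ∈ range r := fun v _ => mem_range.2 (hc v)
  let k : ℕ → ℝ := fun i => #{v | c v = i}
  have hk : ∀ i, 0 ≤ k i := fun i => Nat.cast_nonneg _
  change ∑ i ∈ range r, k i / (k i + m) ≤ 1
  have hx := h fun v => 1 / (k (c v) + m)
  rw [multipartite_form_eq c hc] at hx
  have e1 : ∀ i, ∑ v with c v = i, 1 / (k (c v) + m) = k i / (k i + m) := fun i => by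
    rw [sum_congr rfl fun v hv => by rw [(mem_filter.1 hv).2], sum_const, nsmul_eq_mul]
    simp [k, div_eq_mul_inv]
  have e2 : ∑ v, (1 / (k (c v) + m)) ^ 2 = ∑ i ∈ range r, k i * (1 / (k i + m)) ^ 2 := by
    rw [← sum_fiberwise_of_maps_to hmaps]
    refine sum_congr rfl fun i _ => ?_
    rw [sum_congr rfl fun v hv => by rw [(mem_filter.1 hv).2], sum_const, nsmul_eq_mul]
  simp only [e1, e2] at hx
  have e3 : ∑ i ∈ range r, k i / (k i + m) =
      ∑ i ∈ range r, (k i / (k i + m)) ^ 2 + m * ∑ i ∈ range r, k i * (1 / (k i + m)) ^ 2 := by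
    rw [mul_sum, ← sum_add_distrib]
    refine sum_congr rfl fun i _ => ?_
    rcases eq_or_ne (k i + m) 0 with h0 | h0
    · simp [h0]
    · field_simp
  have h0 : 0 ≤ ∑ i ∈ range r, k i / (k i + m) :=
    sum_nonneg fun i _ => div_nonneg (hk i) (add_nonneg (hk i) hm)
  nlinarith

/-! ### Balancing the class sizes -/

/-- Discrete concavity of `k ↦ k / (k + m)`: on the integers its graph lies on or below the line
through its points at `q` and `q + 1`. -/
lemma div_le_chord {m : ℝ} (hm : 0 ≤ m) (q k : ℕ) :
    (k : ℝ) / (k + m) ≤ q / (q + m) +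
      (k - q) * (((q + 1 : ℕ) : ℝ) / ((q + 1 : ℕ) + m) - q / (q + m)) := by
  have hint : ((k : ℝ) - q) * (q + 1 - k) ≤ 0 := by
    rcases le_or_gt k q with h | h
    · have : (k : ℝ) ≤ q := by exact_mod_cast h
      nlinarith
    · have : (q : ℝ) + 1 ≤ k := by exact_mod_cast h
      nlinarith
  rcases hm.eq_or_lt with rfl | hm
  · rcases Nat.eq_zero_or_pos q with rfl | hq
    · rcases Nat.eq_zero_or_pos k with rfl | hk
      · simp
      · have : (1 : ℝ) ≤ k := by exact_mod_cast hk
        simp only [add_zero, div_self (by positivity : (k : ℝ) ≠ 0)]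
        simpa using this
    · have : (0 : ℝ) < q := by exact_mod_cast hq
      have h1 : (k : ℝ) / k ≤ 1 := div_self_le_one _
      have h2 : (q : ℝ) / q = 1 := div_self this.ne'
      have h3 : (((q + 1 : ℕ) : ℝ)) / ((q + 1 : ℕ) : ℝ) = 1 := div_self (by positivity)
      simp only [add_zero, h2, h3]
      linarith
  · have hk : (0 : ℝ) < k + m := by positivity
    have hq : (0 : ℝ) < q + m := by positivity
    have hq1 : (0 : ℝ) < q + 1 + m := by positivity
    push_cast
    have key : (q : ℝ) / (q + m) + (k - q) * ((q + 1) / (q + 1 + m) - q / (q + m)) - k / (k + m) =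
        -(m * (((k : ℝ) - q) * (q + 1 - k))) / ((k + m) * (q + m) * (q + 1 + m)) := by
      field_simp
      ring
    have : 0 ≤ -(m * (((k : ℝ) - q) * (q + 1 - k))) / ((k + m) * (q + m) * (q + 1 + m)) := by
      apply div_nonneg _ (by positivity)
      nlinarith
    linarith

lemma sum_div_le_of_balanced {m : ℝ} (hm : 0 ≤ m) (r q : ℕ) (k t : ℕ → ℕ)
    (ht : ∀ i ∈ range r, t i = q ∨ t i = q + 1)
    (hsum : ∑ i ∈ range r, k i = ∑ i ∈ range r, t i) :
    ∑ i ∈ range r, (k i : ℝ) / (k i + m) ≤ ∑ i ∈ range r, (t i : ℝ) / (t i + m) := by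
  have hsum' : ∑ i ∈ range r, (k i : ℝ) = ∑ i ∈ range r, (t i : ℝ) := by exact_mod_cast hsum
  have ht' : ∑ i ∈ range r, (t i : ℝ) / (t i + m) = ∑ i ∈ range r, ((q : ℝ) / (q + m) +
      (t i - q) * (((q + 1 : ℕ) : ℝ) / ((q + 1 : ℕ) + m) - q / (q + m))) := by
    refine sum_congr rfl fun i hi => ?_
    rcases ht i hi with h | h <;> rw [h]
    · simp
    · push_cast; ring
  rw [ht']
  refine (sum_le_sum fun i _ => div_le_chord hm q (k i)).trans_eq ?_
  simp only [sum_add_distrib, ← sum_mul, sum_sub_distrib, hsum']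

lemma card_fin_mod_eq {n r : ℕ} (hr : 0 < r) {i : ℕ} (hi : i < r) :
    #{v : Fin n | (v : ℕ) % r = i} = n / r ∨ #{v : Fin n | (v : ℕ) % r = i} = n / r + 1 := by
  have h : #{v : Fin n | (v : ℕ) % r = i} = n.count (· ≡ i [MOD r]) := by
    rw [Nat.count_eq_card_filter_range, card_filter, card_filter,
      ← Fin.sum_univ_eq_sum_range (fun v => if v ≡ i [MOD r] then 1 else 0)]
    simp only [Nat.ModEq, Nat.mod_eq_of_lt hi]
  rw [h, Nat.count_modEq_card n hr]
  split_ifs <;> simp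

/-- **Spectral Turán theorem.** Every graph `G` of order `n` with `μ(G) > μ(T_r(n))`
contains a clique of order `r + 1`. -/
theorem spectral_turan {V : Type*} [Fintype V] [DecidableEq V] (r n : ℕ)
    (G : SimpleGraph V) (hcard : Fintype.card V = n)
    (hmu : (SimpleGraph.turanGraph n r).specMax < G.specMax) :
    ∃ t : Finset V, G.IsNClique (r + 1) t := by
  classical
  by_contra hno
  push Not at hno
  -- On the empty vertex set both values are suprema over an empty type, hence `0`.
  have hV : Nonempty V := by
    by_contra hV
    rw [not_nonempty_iff] at hV
    have hn : n = 0 := by rw [← hcard]; exact Fintype.card_eq_zero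
    subst hn
    simp [SimpleGraph.specMax] at hmu
  have hn : 0 < n := hcard ▸ Fintype.card_pos
  -- The Turán graph with `0` parts is by convention complete, but a single vertex is a `1`-clique.
  have hr : 0 < r := by
    rcases Nat.eq_zero_or_pos r with rfl | h
    · exact absurd (by simp [SimpleGraph.isNClique_iff]) (hno {hV.some})
    · exact h
  set m := (SimpleGraph.turanGraph n r).specMax with hmdef
  have hT : ∀ y : Fin n → ℝ, ∑ u : Fin n, ∑ v : Fin n,
      (if (u : ℕ) % r ≠ (v : ℕ) % r then y u * y v else 0) ≤
      m * ∑ v, y v ^ 2 := by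
    intro y
    refine le_trans (le_of_eq ?_) (adjForm_le_specMax (SimpleGraph.turanGraph n r) y)
    unfold adjForm
    refine sum_congr rfl fun u _ => sum_congr rfl fun v _ => ?_
    by_cases h : (u : ℕ) % r = (v : ℕ) % r <;> simp [SimpleGraph.turanGraph, h]
  have hm : 0 ≤ m := by
    have h := hT (Pi.single ⟨0, hn⟩ 1)
    have h1 : ∑ v : Fin n, (Pi.single (⟨0, hn⟩ : Fin n) (1 : ℝ) : Fin n → ℝ) v ^ 2 = 1 := by
      simp [Pi.single_apply]
    rw [h1, mul_one] at h
    refine le_trans (sum_nonneg fun u _ => sum_nonneg fun v _ => ?_) h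
    split_ifs
    · simp only [Pi.single_apply]; split_ifs <;> simp
    · exact le_rfl
  have hbal := sum_div_le_one (fun v : Fin n => (v : ℕ) % r) (fun v => Nat.mod_lt _ hr) hm hT
  obtain ⟨x, hx, hpos, hle⟩ := exists_specMax_le_adjForm G
  obtain ⟨c, hc, hcle⟩ := exists_coloring_majorant G x hx r univ (fun t _ => hno t)
  have hc' : ∀ v, c v < r := fun v => hc v (mem_univ v)
  have hk := sum_div_le_of_balanced hm r (n / r) (fun i => #{v | c v = i})
    (fun i => #{v : Fin n | (v : ℕ) % r = i})
    (fun i hi => card_fin_mod_eq hr (mem_range.1 hi)) (by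
      rw [← card_eq_sum_card_fiberwise fun v _ => by simpa using hc' v,
        ← card_eq_sum_card_fiberwise fun v _ => by simpa using Nat.mod_lt _ hr]
      simp [hcard])
  have hfin := multipartite_form_le c hc' x hm (hk.trans hbal)
  have : G.specMax * ∑ v, x v ^ 2 ≤ m * ∑ v, x v ^ 2 := (hle.trans hcle).trans hfin
  exact absurd (le_of_mul_le_mul_right this hpos) (not_le.2 hmu)
end

section
/- Let 0 < α ≤ 1/4, 0 < β ≤ 1/2, 1/2 − α/4 ≤ γ < 1, K ≥ 0, n ≥ (42K + 4)/(α²β), and let G be a graph of order n. If μ(G) > γn − K/n and δ(G) ≤ (γ − α)n, then G contains an induced subgraph H with |H| ≥ (1 − β)n satisfying at least one of: (a) μ(H) > γ(1 + βα/2)|H|; (b) μ(H) > γ|H| and δ(H) > (γ − α)|H|. -/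
/-- The minimum degree of a finite simple graph. -/
noncomputable def SimpleGraph.minDeg {V : Type*} [Fintype V] [DecidableEq V]
    (G : SimpleGraph V) : ℕ :=
  letI := Classical.decRel G.Adj
  G.minDegree


namespace SpectralReduction

open Finset

/-- The `0/1` adjacency indicator of `G`, with classical decidability. -/
noncomputable def adj01 {V : Type*} (G : SimpleGraph V) (v w : V) : ℝ :=
  letI := Classical.decRel G.Adj
  if G.Adj v w then 1 else 0

/-- `x` restricted to `s` is a unit eigenvector, with eigenvalue `μ`, of the subgraph of `G`
induced by `s`. Values of `x` outside `s` play no role. -/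
def IsUnitEigenvector {V : Type*} (G : SimpleGraph V) (s : Finset V) (μ : ℝ) (x : V → ℝ) : Prop :=
  (∀ v ∈ s, ∑ w ∈ s, adj01 G v w * x w = μ * x v) ∧ ∑ v ∈ s, x v ^ 2 = 1

/-! ### Adjacency indicator -/

section Basic

variable {V : Type*} (G : SimpleGraph V)

lemma adj01_comm (v w : V) : adj01 G v w = adj01 G w v := by
  by_cases h : G.Adj v w
  · simp [adj01, h, h.symm]
  · rw [adj01, adj01, if_neg h, if_neg fun h' => h h'.symm]

lemma adj01_self (v : V) : adj01 G v v = 0 := by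
  simp [adj01]

lemma adj01_mul_self (v w : V) : adj01 G v w * adj01 G v w = adj01 G v w := by
  unfold adj01; split_ifs <;> simp

lemma adj01_nonneg (v w : V) : 0 ≤ adj01 G v w := by
  unfold adj01; split_ifs <;> simp

lemma adj01_le_one (v w : V) : adj01 G v w ≤ 1 := by
  unfold adj01; split_ifs <;> simp

end Basic

/-! ### Largest eigenvalue and minimum degree of a graph -/

section Whole

variable {W : Type*} [Fintype W] [DecidableEq W] (H : SimpleGraph W)

lemma exists_eigenvector [Nonempty W] :
    ∃ x : W → ℝ, (∀ v, ∑ w, adj01 H v w * x w = H.specMax * x v) ∧ ∑ v, x v ^ 2 = 1 := by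
  let := Classical.decRel H.Adj
  have hA : (H.adjMatrix ℝ).IsHermitian := by
    rw [Matrix.IsHermitian, Matrix.conjTranspose_eq_transpose_of_trivial]
    exact SimpleGraph.isSymm_adjMatrix H
  obtain ⟨i, hi⟩ := exists_eq_ciSup_of_finite (f := hA.eigenvalues)
  have hi' : hA.eigenvalues i = H.specMax := hi
  refine ⟨fun v => hA.eigenvectorBasis i v, fun v => ?_, ?_⟩
  · have h := congrFun (hA.mulVec_eigenvectorBasis i) v
    rw [hi'] at h
    simpa [Matrix.mulVec, dotProduct, adj01, SimpleGraph.adjMatrix_apply] using h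
  · have h : ‖hA.eigenvectorBasis i‖ = 1 := hA.eigenvectorBasis.orthonormal.1 i
    have h2 := EuclideanSpace.real_norm_sq_eq (hA.eigenvectorBasis i)
    rw [h] at h2
    simpa using h2.symm

/-- Rayleigh's inequality for the largest adjacency eigenvalue. -/
lemma rayleigh_le (y : W → ℝ) :
    ∑ v, y v * ∑ w, adj01 H v w * y w ≤ H.specMax * ∑ v, y v ^ 2 := by
  let := Classical.decRel H.Adj
  have hA : (H.adjMatrix ℝ).IsHermitian := by
    rw [Matrix.IsHermitian, Matrix.conjTranspose_eq_transpose_of_trivial]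
    exact SimpleGraph.isSymm_adjMatrix H
  have hle : ∀ i, hA.eigenvalues i ≤ H.specMax := fun i =>
    le_ciSup (f := hA.eigenvalues) (Set.finite_range _).bddAbove i
  set b := hA.eigenvectorBasis with hb
  -- Both sides are expanded in the orthonormal eigenbasis `b`.
  have hin : ∀ p q : W → ℝ, inner ℝ (WithLp.toLp 2 p) (WithLp.toLp 2 q) = ∑ v, p v * q v := by
    intro p q
    simp [PiLp.inner_apply, mul_comm]
  have hS : ∑ v, y v ^ 2 = ∑ i, inner ℝ (WithLp.toLp 2 y) (b i) ^ 2 := by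
    have h := b.sum_inner_mul_inner (WithLp.toLp 2 y) (WithLp.toLp 2 y)
    rw [hin] at h
    rw [Finset.sum_congr rfl (fun v _ => sq (y v)), ← h]
    refine Finset.sum_congr rfl fun i _ => ?_
    rw [sq, real_inner_comm (b i)]
  have hev : ∀ i, inner ℝ (b i) (WithLp.toLp 2 ((H.adjMatrix ℝ).mulVec y))
      = hA.eigenvalues i * inner ℝ (WithLp.toLp 2 y) (b i) := by
    intro i
    have h1 : inner ℝ (b i) (WithLp.toLp 2 ((H.adjMatrix ℝ).mulVec y))
        = (b i).ofLp ⬝ᵥ ((H.adjMatrix ℝ).mulVec y) := hin (b i).ofLp _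
    have h2 : inner ℝ (WithLp.toLp 2 y) (b i) = y ⬝ᵥ (b i).ofLp := hin y (b i).ofLp
    rw [h1, h2, Matrix.dotProduct_mulVec, ← Matrix.mulVec_transpose,
      (SimpleGraph.isSymm_adjMatrix H).eq, hA.mulVec_eigenvectorBasis i, smul_dotProduct,
      dotProduct_comm, smul_eq_mul]
  have hQ : ∑ v, y v * ∑ w, adj01 H v w * y w
      = ∑ i, hA.eigenvalues i * inner ℝ (WithLp.toLp 2 y) (b i) ^ 2 := by
    have h := b.sum_inner_mul_inner (WithLp.toLp 2 y)
      (WithLp.toLp 2 ((H.adjMatrix ℝ).mulVec y))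
    rw [hin] at h
    have h0 : ∑ v, y v * ∑ w, adj01 H v w * y w
        = ∑ v, y v * ((H.adjMatrix ℝ).mulVec y) v := by
      simp [Matrix.mulVec, dotProduct, adj01, SimpleGraph.adjMatrix_apply]
    rw [h0, ← h]
    refine Finset.sum_congr rfl fun i _ => ?_
    rw [hev]; ring
  rw [hQ, hS, Finset.mul_sum]
  exact Finset.sum_le_sum fun i _ => mul_le_mul_of_nonneg_right (hle i) (sq_nonneg _)

lemma exists_minDeg_vertex [Nonempty W] : ∃ v, ∑ w, adj01 H v w = H.minDeg := by
  let := Classical.decRel H.Adj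
  obtain ⟨v, hv⟩ := H.exists_minimal_degree_vertex
  refine ⟨v, ?_⟩
  have h : H.minDeg = H.degree v := hv
  rw [h, ← SimpleGraph.card_neighborFinset_eq_degree, SimpleGraph.neighborFinset_eq_filter]
  simp [adj01]

end Whole

/-! ### Induced subgraphs and vertex deletion -/

section Induced

variable {V : Type*} (G : SimpleGraph V)

lemma sum_coe_finset (s : Finset V) (f : V → ℝ) :
    ∑ v : ((s : Set V) : Type _), f v = ∑ v ∈ s, f v :=
  Finset.sum_coe_sort s f

lemma adj01_induce (s : Finset V) (v w : ((s : Set V) : Type _)) :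
    adj01 (SimpleGraph.induce (↑s) G) v w = adj01 G v w := by
  have h : (SimpleGraph.induce (↑s) G).Adj v w ↔ G.Adj v w := by simp
  by_cases hG : G.Adj v w
  · rw [adj01, adj01, if_pos hG, if_pos (h.2 hG)]
  · rw [adj01, adj01, if_neg hG, if_neg (mt h.1 hG)]

lemma exists_isUnitEigenvector_induce [DecidableEq V] {s : Finset V} (hs : s.Nonempty) :
    ∃ x, IsUnitEigenvector G s (SimpleGraph.induce (↑s) G).specMax x := by
  have : Nonempty ((s : Set V) : Type _) := hs.to_subtype
  obtain ⟨x, hx, hx1⟩ := exists_eigenvector (SimpleGraph.induce (↑s) G)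
  set y : V → ℝ := fun v => if h : v ∈ s then x ⟨v, h⟩ else 0 with hy
  have hyx : ∀ v : ((s : Set V) : Type _), y v = x v := by
    rintro ⟨v, hv⟩
    have hv' : v ∈ s := hv
    simp [hy, hv']
  refine ⟨y, fun v hv => ?_, ?_⟩
  · have h := hx ⟨v, hv⟩
    rw [← hyx] at h
    rw [← h, ← sum_coe_finset]
    exact Finset.sum_congr rfl fun w _ => by rw [adj01_induce, hyx]
  · rw [← sum_coe_finset, ← hx1]
    exact Finset.sum_congr rfl fun w _ => by rw [hyx]

lemma rayleigh_le_induce [DecidableEq V] (s : Finset V) (y : V → ℝ) :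
    ∑ v ∈ s, y v * ∑ w ∈ s, adj01 G v w * y w
      ≤ (SimpleGraph.induce (↑s) G).specMax * ∑ v ∈ s, y v ^ 2 := by
  have h := rayleigh_le (SimpleGraph.induce (↑s) G) (fun v => y v)
  simp only [adj01_induce] at h
  rw [sum_coe_finset s (fun v => y v ^ 2)] at h
  rw [← sum_coe_finset s]
  simpa only [← sum_coe_finset s (fun w => adj01 G _ w * y w)] using h

lemma exists_minDeg_vertex_induce [DecidableEq V] {s : Finset V} (hs : s.Nonempty) :
    ∃ v ∈ s, ∑ w ∈ s, adj01 G v w = (SimpleGraph.induce (↑s) G).minDeg := by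
  have : Nonempty ((s : Set V) : Type _) := hs.to_subtype
  obtain ⟨v, hv⟩ := exists_minDeg_vertex (SimpleGraph.induce (↑s) G)
  refine ⟨v, v.2, ?_⟩
  rw [← hv, ← sum_coe_finset]
  exact Finset.sum_congr rfl fun w _ => by rw [adj01_induce]

/-- Deleting a vertex `u` costs little of the largest eigenvalue when the entry of an eigenvector
at `u` is small: test the smaller graph with the restricted eigenvector. -/
lemma specMax_erase [DecidableEq V] {s : Finset V} {μ : ℝ} {x : V → ℝ}
    (hx : IsUnitEigenvector G s μ x)
    {u : V} (hu : u ∈ s) :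
    μ * (1 - 2 * x u ^ 2)
      ≤ (SimpleGraph.induce (↑(s.erase u)) G).specMax * (1 - x u ^ 2) := by
  obtain ⟨he, h1⟩ := hx
  have hR := rayleigh_le_induce G (s.erase u) x
  have hin : ∀ v ∈ s.erase u, x v * ∑ w ∈ s.erase u, adj01 G v w * x w
      = μ * x v ^ 2 - x u * (adj01 G u v * x v) := by
    intro v hv
    have h := he v (mem_of_mem_erase hv)
    rw [← Finset.add_sum_erase s _ hu] at h
    rw [adj01_comm G u v]
    linear_combination x v * h
  have hu' := he u hu
  rw [← Finset.add_sum_erase s _ hu, adj01_self] at hu'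
  rw [← Finset.add_sum_erase s _ hu] at h1
  rw [Finset.sum_congr rfl hin, Finset.sum_sub_distrib, ← Finset.mul_sum, ← Finset.mul_sum] at hR
  have h2 : ∑ v ∈ s.erase u, x v ^ 2 = 1 - x u ^ 2 := by linarith
  have h3 : ∑ v ∈ s.erase u, adj01 G u v * x v = μ * x u := by linarith
  rw [h2, h3] at hR
  linarith

/-- A vertex `w` of small degree `d` forces the smallest squared entry of an eigenvector to be
small: apply Cauchy–Schwarz to the eigenvalue equation at `w`. -/
lemma entry_bound {s : Finset V} {μ t : ℝ} {x : V → ℝ} (hx : IsUnitEigenvector G s μ x)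
    (ht : ∀ v ∈ s, t ≤ x v ^ 2) {w : V} (hw : w ∈ s) :
    t * (μ ^ 2 + (∑ v ∈ s, adj01 G w v) * (s.card - ∑ v ∈ s, adj01 G w v))
      ≤ ∑ v ∈ s, adj01 G w v := by
  obtain ⟨he, h1⟩ := hx
  set d := ∑ v ∈ s, adj01 G w v with hd
  have hd0 : 0 ≤ d := Finset.sum_nonneg fun v _ => adj01_nonneg G w v
  have hcs := Finset.sum_mul_sq_le_sq_mul_sq s (fun v => adj01 G w v)
    (fun v => adj01 G w v * x v)
  have e1 : ∑ v ∈ s, adj01 G w v * (adj01 G w v * x v) = μ * x w := by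
    rw [← he w hw]
    exact Finset.sum_congr rfl fun v _ => by rw [← mul_assoc, adj01_mul_self]
  have e2 : ∑ v ∈ s, adj01 G w v ^ 2 = d :=
    Finset.sum_congr rfl fun v _ => by rw [sq, adj01_mul_self]
  have e3 : ∑ v ∈ s, (adj01 G w v * x v) ^ 2 = ∑ v ∈ s, adj01 G w v * x v ^ 2 :=
    Finset.sum_congr rfl fun v _ => by rw [mul_pow, sq (adj01 G w v), adj01_mul_self]
  rw [e1, e2, e3] at hcs
  have e4 : ∑ v ∈ s, (1 - adj01 G w v) * t ≤ ∑ v ∈ s, (1 - adj01 G w v) * x v ^ 2 :=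
    Finset.sum_le_sum fun v hv =>
      mul_le_mul_of_nonneg_left (ht v hv) (by linarith [adj01_le_one G w v])
  rw [← Finset.sum_mul, Finset.sum_sub_distrib] at e4
  simp only [sub_mul, one_mul, Finset.sum_sub_distrib, Finset.sum_const, nsmul_eq_mul, mul_one,
    h1, ← hd] at e4
  have e5 : μ ^ 2 * t ≤ μ ^ 2 * x w ^ 2 := mul_le_mul_of_nonneg_left (ht w hw) (sq_nonneg _)
  have e6 : d * (∑ v ∈ s, adj01 G w v * x v ^ 2) ≤ d * (1 - (s.card - d) * t) :=
    mul_le_mul_of_nonneg_left (by linarith) hd0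
  nlinarith

end Induced

/-! ### Growth of the density -/

section Numerics

/-- The density form of the entry bound: `τ ≤ 1 - α`, with `D = d / m`, `M = μ / m` and
`τ = t * m`. -/
lemma tau_le {α γ M D τ : ℝ} (hα0 : 0 < α) (hα : α ≤ 1 / 4) (hγ0 : 1 / 2 - α / 4 ≤ γ)
    (hγ1 : γ < 1) (hM : γ - α / 100 ≤ M) (hD0 : 0 ≤ D) (hD : D ≤ γ - α)
    (h : τ * (M ^ 2 + D * (1 - D)) ≤ D) : τ ≤ 1 - α := by
  have hM2 : (γ - α / 100) ^ 2 ≤ M ^ 2 := pow_le_pow_left₀ (by linarith) hM 2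
  have hD2 : D ^ 2 ≤ (γ - α) ^ 2 := pow_le_pow_left₀ hD0 hD 2
  have key : γ - α ≤ (1 - α) * (99 / 100 * (2 * γ - 101 / 100 * α)) := by
    nlinarith [mul_nonneg hα0.le (sub_nonneg.2 hα), mul_nonneg hα0.le (sub_nonneg.2 hγ0),
      mul_nonneg (sub_nonneg.2 hα) (sub_nonneg.2 hγ0), mul_nonneg hα0.le (sub_nonneg.2 hγ1.le)]
  have h1 : α * D ≤ (1 - α) * (M ^ 2 - D ^ 2) := by
    have e1 : α * D ≤ α * (γ - α) := mul_le_mul_of_nonneg_left hD hα0.le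
    have e2 : α * (γ - α) ≤ α * ((1 - α) * (99 / 100 * (2 * γ - 101 / 100 * α))) :=
      mul_le_mul_of_nonneg_left key hα0.le
    have e3 : (1 - α) * ((γ - α / 100) ^ 2 - (γ - α) ^ 2) ≤ (1 - α) * (M ^ 2 - D ^ 2) :=
      mul_le_mul_of_nonneg_left (by linarith) (by linarith)
    nlinarith
  have hpos : 0 < M ^ 2 + D * (1 - D) := by
    have : 0 < M ^ 2 := by have : 0 < M := by linarith
                           positivity
    nlinarith [mul_nonneg hD0 (show (0 : ℝ) ≤ 1 - D by linarith)]
  refine le_of_mul_le_mul_right (h.trans ?_) hpos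
  nlinarith

/-- One deletion multiplies the density `μ / m` by at least `1 + (9 / 10) * α / m`. -/
lemma density_increment {α γ μ μ' m d t : ℝ} (hα0 : 0 < α) (hα : α ≤ 1 / 4)
    (hγ0 : 1 / 2 - α / 4 ≤ γ) (hγ1 : γ < 1) (hm : 16 ≤ α * m)
    (hμ : (γ - α / 100) * m ≤ μ) (hd0 : 0 ≤ d) (hd : d ≤ (γ - α) * m)
    (h1 : t * (μ ^ 2 + d * (m - d)) ≤ d) (h2 : μ * (1 - 2 * t) ≤ μ' * (1 - t)) :
    μ * ((m - 1) * (m + 9 / 10 * α)) ≤ μ' * m ^ 2 := by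
  have hm64 : 64 ≤ m := by nlinarith
  have hm0 : 0 < m := by linarith
  have hτ : t * m ≤ 1 - α := by
    refine tau_le (M := μ / m) (D := d / m) hα0 hα hγ0 hγ1 ((le_div_iff₀ hm0).2 hμ)
      (by positivity) ((div_le_iff₀ hm0).2 hd) ?_
    have : t * m * ((μ / m) ^ 2 + d / m * (1 - d / m)) = t * (μ ^ 2 + d * (m - d)) / m := by
      field_simp
    rw [this]
    gcongr
  have hμ0 : 0 ≤ μ := le_trans (mul_nonneg (by linarith) hm0.le) hμ
  have ht1 : 0 < 1 - t := by nlinarith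
  -- The factor `(1 - 2t) / (1 - t)` decreases in `t`, so the extreme case is `t = (1 - α) / m`.
  have hc : (m - 1) * (m + 9 / 10 * α) * (1 - t) ≤ m ^ 2 * (1 - 2 * t) := by
    have hext : (m - 1) * (m + 9 / 10 * α) * (m - (1 - α)) ≤ m ^ 2 * (m - 2 * (1 - α)) := by
      nlinarith [mul_nonneg hm0.le (sub_nonneg.2 hm), mul_pos hα0 hα0]
    have hcoef : 0 ≤ 2 * m ^ 2 - (m - 1) * (m + 9 / 10 * α) := by nlinarith
    have := mul_le_mul_of_nonneg_left hτ hcoef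
    refine le_of_mul_le_mul_right ?_ hm0
    nlinarith
  refine le_of_mul_le_mul_right ?_ ht1
  calc μ * ((m - 1) * (m + 9 / 10 * α)) * (1 - t)
      = μ * ((m - 1) * (m + 9 / 10 * α) * (1 - t)) := by ring
    _ ≤ μ * (m ^ 2 * (1 - 2 * t)) := mul_le_mul_of_nonneg_left hc hμ0
    _ = μ * (1 - 2 * t) * m ^ 2 := by ring
    _ ≤ μ' * (1 - t) * m ^ 2 := mul_le_mul_of_nonneg_right h2 (by positivity)
    _ = μ' * m ^ 2 * (1 - t) := by ring

end Numerics

/-! ### Iterated deletion -/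

/-- The deletion step: the lower bound `L` for `μ / (γ * m)` grows by `(3 / 4) * α / n` when a
vertex with smallest squared eigenvector entry is removed. -/
lemma exists_erase {V : Type*} [DecidableEq V] (G : SimpleGraph V) {α γ μ n L : ℝ}
    (hα0 : 0 < α) (hα : α ≤ 1 / 4) (hγ0 : 1 / 2 - α / 4 ≤ γ) (hγ1 : γ < 1)
    {s : Finset V} {x : V → ℝ} (hx : IsUnitEigenvector G s μ x)
    (hm : 16 ≤ α * s.card) (hmn : (s.card : ℝ) ≤ n) (hL : 1 - α / 100 ≤ L)
    (hμ : γ * s.card * L < μ)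
    (hd : ∃ w ∈ s, ∑ v ∈ s, adj01 G w v ≤ (γ - α) * s.card) :
    ∃ u ∈ s, γ * (s.erase u).card * (L + 3 / 4 * α / n)
      < (SimpleGraph.induce (↑(s.erase u)) G).specMax := by
  obtain ⟨w, hw, hd⟩ := hd
  obtain ⟨u, hu, hmin⟩ := s.exists_min_image (fun v => x v ^ 2) ⟨w, hw⟩
  refine ⟨u, hu, ?_⟩
  set μ' := (SimpleGraph.induce (↑(s.erase u)) G).specMax
  have hcard : ((s.erase u).card : ℝ) = s.card - 1 := by
    rw [Finset.card_erase_of_mem hu, Nat.cast_sub (Finset.card_pos.2 ⟨u, hu⟩), Nat.cast_one]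
  rw [hcard]
  set m : ℝ := (s.card : ℝ)
  have hm64 : 64 ≤ m := by nlinarith
  have hm0 : 0 < m := by linarith
  have hγp : 0 < γ := by linarith
  have hμlow : (γ - α / 100) * m ≤ μ := by
    have h1 : γ - α / 100 ≤ γ * L := by nlinarith
    have := mul_le_mul_of_nonneg_right h1 hm0.le
    linarith
  have hinc := density_increment hα0 hα hγ0 hγ1 hm hμlow
    (Finset.sum_nonneg fun v _ => adj01_nonneg G w v) hd
    (entry_bound G hx hmin hw) (specMax_erase G hx hu)
  have hn : 3 / 4 * α / n ≤ 3 / 4 * α / m := by gcongr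
  have hLm : L + 3 / 4 * α / m ≤ L * (1 + 9 / 10 * α / m) := by
    have h1 : 3 / 4 * α ≤ L * (9 / 10 * α) := by nlinarith
    have h2 : 3 / 4 * α / m ≤ L * (9 / 10 * α) / m := by gcongr
    calc L + 3 / 4 * α / m ≤ L + L * (9 / 10 * α) / m := by linarith
      _ = _ := by ring
  have hm1 : 0 < m - 1 := by linarith
  calc γ * (m - 1) * (L + 3 / 4 * α / n)
      ≤ γ * (m - 1) * (L * (1 + 9 / 10 * α / m)) :=
        mul_le_mul_of_nonneg_left (by linarith) (by positivity)
    _ = γ * m * L * ((m - 1) * (m + 9 / 10 * α)) / m ^ 2 := by field_simp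
    _ < μ * ((m - 1) * (m + 9 / 10 * α)) / m ^ 2 := by gcongr
    _ ≤ μ' := by rw [div_le_iff₀ (by positivity)]; exact hinc

/-- Repeated deletion: as long as the second alternative never occurs, every step is possible and
the density keeps growing; `i + 1` is the number of deleted vertices. The term `α / (4 * n)`
absorbs the initial deficit `K / n`. -/
lemma deletion_chain {V : Type*} [Fintype V] [DecidableEq V] (G : SimpleGraph V) {n k : ℕ}
    {α β γ K : ℝ} (hα0 : 0 < α) (hα : α ≤ 1 / 4) (hβ : β ≤ 1 / 2)
    (hγ0 : 1 / 2 - α / 4 ≤ γ) (hγ1 : γ < 1) (hnpos : (0 : ℝ) < n) (hαn : 32 ≤ α * n)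
    (hKn : K / n ≤ γ * α / 4) (hk1 : (k : ℝ) ≤ β * n)
    (hcard : Fintype.card V = n) (hmu : γ * n - K / n < G.specMax)
    (hδ : (G.minDeg : ℝ) ≤ (γ - α) * n)
    (hno : ∀ s : Finset V, (1 - β) * n ≤ (s.card : ℝ) →
      γ * s.card < (SimpleGraph.induce (↑s) G).specMax →
      ((SimpleGraph.induce (↑s) G).minDeg : ℝ) ≤ (γ - α) * s.card) (i : ℕ) (hi : i + 1 ≤ k) :
    ∃ s : Finset V, (s.card : ℝ) = n - (i + 1) ∧
      γ * s.card * (1 - α / (4 * n) + (i + 1) * (3 / 4 * α / n))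
        < (SimpleGraph.induce (↑s) G).specMax := by
  have hγp : 0 < γ := by linarith
  have hsmall : α / (4 * n) ≤ α / 100 := by
    gcongr
    nlinarith
  revert hi
  induction i with
  | zero =>
    intro _
    have : Nonempty V := by
      rw [← Fintype.card_pos_iff, hcard]
      exact_mod_cast hnpos
    obtain ⟨x, hx, hx1⟩ := exists_eigenvector G
    obtain ⟨w, hw⟩ := exists_minDeg_vertex G
    have hcn : ((Finset.univ : Finset V).card : ℝ) = n := by
      rw [Finset.card_univ, hcard]
    have hμ : γ * (Finset.univ : Finset V).card * (1 - α / (4 * n)) < G.specMax := by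
      rw [hcn]
      have : γ * n * (1 - α / (4 * n)) = γ * n - γ * α / 4 := by field_simp
      linarith
    obtain ⟨u, hu, h⟩ := exists_erase G (n := n) hα0 hα hγ0 hγ1
      (s := Finset.univ) (μ := G.specMax) (x := x) ⟨fun v _ => hx v, hx1⟩
      (by rw [hcn]; linarith) hcn.le (L := 1 - α / (4 * n)) (by linarith) hμ
      ⟨w, Finset.mem_univ w, by rw [hw, hcn]; exact hδ⟩
    refine ⟨Finset.univ.erase u, ?_, ?_⟩
    · rw [Finset.card_erase_of_mem hu, Nat.cast_sub (Finset.card_pos.2 ⟨u, hu⟩), hcn]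
      simp
    · simpa using h
  | succ i ih =>
    intro hik
    obtain ⟨s, hs, hspec⟩ := ih (by omega)
    have hikr : (i : ℝ) + 1 + 1 ≤ k := by exact_mod_cast hik
    have hbig : (1 - β) * n ≤ (s.card : ℝ) := by rw [hs]; linarith
    have hmpos : (n : ℝ) / 2 ≤ s.card := by nlinarith
    have hspos : (0 : ℝ) < s.card := by linarith
    have hsne : s.Nonempty := Finset.card_pos.1 (by exact_mod_cast hspos)
    have hαn0 : 0 < α / n := by positivity
    have hL1 : 1 ≤ 1 - α / (4 * n) + (i + 1) * (3 / 4 * α / n) := by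
      have e : α / (4 * n) = 1 / 4 * (α / n) := by field_simp
      have e2 : 3 / 4 * α / n = 3 / 4 * (α / n) := by ring
      rw [e, e2]
      nlinarith [mul_nonneg (Nat.cast_nonneg (α := ℝ) i) hαn0.le]
    have hγs : γ * s.card < (SimpleGraph.induce (↑s) G).specMax :=
      lt_of_le_of_lt (le_mul_of_one_le_right (by positivity) hL1) hspec
    have hdeg := hno s hbig hγs
    obtain ⟨x, hx⟩ := exists_isUnitEigenvector_induce G hsne
    obtain ⟨w, hws, hw⟩ := exists_minDeg_vertex_induce G hsne
    obtain ⟨u, hu, h⟩ := exists_erase G (n := n) hα0 hα hγ0 hγ1 hx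
      (by nlinarith) (by rw [hs]; linarith [Nat.cast_nonneg (α := ℝ) i])
      (by linarith) hspec ⟨w, hws, by rw [hw]; exact hdeg⟩
    refine ⟨s.erase u, ?_, ?_⟩
    · rw [Finset.card_erase_of_mem hu, Nat.cast_sub (Finset.card_pos.2 ⟨u, hu⟩), hs]
      push_cast
      ring
    · refine lt_of_eq_of_lt ?_ h
      push_cast
      ring

end SpectralReduction

/-- Let `0 < α ≤ 1/4`, `0 < β ≤ 1/2`, `1/2 - α/4 ≤ γ < 1`, `K ≥ 0`,
`n ≥ (42K + 4)/(α²β)`, and `G` a graph of order `n`. If `μ(G) > γn - K/n` and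
`δ(G) ≤ (γ - α)n`, then `G` has an induced subgraph `H` with `|H| ≥ (1 - β)n` such that
either `μ(H) > γ(1 + βα/2)|H|`, or both `μ(H) > γ|H|` and `δ(H) > (γ - α)|H|`. -/
theorem spectral_min_degree_reduction {V : Type*} [Fintype V] [DecidableEq V] (n : ℕ)
    (α β γ K : ℝ) (hα0 : 0 < α) (hα : α ≤ 1 / 4) (hβ0 : 0 < β) (hβ : β ≤ 1 / 2)
    (hγ0 : 1 / 2 - α / 4 ≤ γ) (hγ1 : γ < 1) (hK : 0 ≤ K)
    (hn : (42 * K + 4) / (α ^ 2 * β) ≤ (n : ℝ))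
    (G : SimpleGraph V) (hcard : Fintype.card V = n)
    (hmu : γ * n - K / n < G.specMax)
    (hδ : (G.minDeg : ℝ) ≤ (γ - α) * n) :
    ∃ s : Finset V, (1 - β) * n ≤ (s.card : ℝ) ∧
      (γ * (1 + β * α / 2) * s.card < (SimpleGraph.induce (↑s) G).specMax ∨
       (γ * s.card < (SimpleGraph.induce (↑s) G).specMax ∧
        (γ - α) * s.card < ((SimpleGraph.induce (↑s) G).minDeg : ℝ))) := by
  have hab : 0 < α ^ 2 * β := by positivity
  have hn1 : 42 * K + 4 ≤ n * (α ^ 2 * β) := (div_le_iff₀ hab).1 hn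
  have hnpos : (0 : ℝ) < n := by
    by_contra hc
    nlinarith
  have hβn : 64 ≤ β * n := by
    have : α ^ 2 ≤ 1 / 16 := by nlinarith
    nlinarith [mul_pos hβ0 hnpos]
  have hαn : 32 ≤ α * n := by
    have h1 : α * β ≤ 1 / 8 := by nlinarith
    nlinarith [mul_pos hα0 hnpos]
  have hγp : 0 < γ := by linarith
  have hKn : K / n ≤ γ * α / 4 := by
    rw [div_le_iff₀ hnpos]
    have h1 : α * β ≤ 1 / 8 := by nlinarith
    nlinarith [mul_pos hα0 hnpos]
  set k := ⌊β * n⌋₊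
  have hk1 : (k : ℝ) ≤ β * n := Nat.floor_le (by positivity)
  have hk2 : β * n < k + 1 := Nat.lt_floor_add_one _
  by_contra hno
  push Not at hno
  -- After `k = ⌊βn⌋` deletions the density exceeds the bound of the first alternative.
  have hk0 : 1 ≤ k := by
    have : (1 : ℝ) ≤ k := by linarith
    exact_mod_cast this
  obtain ⟨s, hs, hspec⟩ := SpectralReduction.deletion_chain G hα0 hα hβ hγ0 hγ1 hnpos hαn
    hKn hk1 hcard hmu hδ (fun s hs => (hno s hs).2) (k - 1) (by omega)
  rw [Nat.cast_sub hk0, Nat.cast_one, sub_add_cancel] at hs hspec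
  refine absurd ((hno s (by rw [hs]; linarith)).1) (not_le.2 (lt_of_le_of_lt ?_ hspec))
  have hfin : 1 + β * α / 2 ≤ 1 - α / (4 * n) + k * (3 / 4 * α / n) := by
    have e : 1 - α / (4 * n) + k * (3 / 4 * α / n) - (1 + β * α / 2)
        = α / n * (3 / 4 * k - 1 / 4 - β * n / 2) := by
      field_simp
      ring
    have : 0 ≤ α / n * (3 / 4 * k - 1 / 4 - β * n / 2) :=
      mul_nonneg (by positivity) (by linarith)
    linarith
  calc γ * (1 + β * α / 2) * s.card = γ * s.card * (1 + β * α / 2) := by ring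
    _ ≤ _ := mul_le_mul_of_nonneg_left hfin (by positivity)
end

section
/- Let r ≥ 2 and let G be a graph of order n. If G contains a clique of order r+1 and δ(G) > (1 − 1/r − 1/r⁴)n, then js_{r+1}(G) > n^{r-1} / r^{r+3}. -/
/-- `G.jointSize r` is the maximum size of an `r`-joint in `G`, i.e. the maximum number
of distinct `r`-cliques of `G` sharing a common edge. -/
noncomputable def SimpleGraph.jointSize {V : Type*} [Fintype V] (G : SimpleGraph V)
    (r : ℕ) : ℕ :=
  sSup {t : ℕ | ∃ u v : V, G.Adj u v ∧ ∃ S : Finset (Finset V),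
    S.card = t ∧ ∀ s ∈ S, G.IsNClique r s ∧ u ∈ s ∧ v ∈ s}

open Finset

/-- The cliques of order `s` of `G` all of whose vertices lie in `W`. -/
noncomputable def SimpleGraph.cliquesIn {V : Type*} [Fintype V] (G : SimpleGraph V)
    (W : Finset V) (s : ℕ) : Finset (Finset V) := by
  classical exact univ.filter fun T => T ⊆ W ∧ G.IsNClique s T

lemma mem_cliquesIn {V : Type*} [Fintype V] {G : SimpleGraph V} {W : Finset V} {s : ℕ}
    {T : Finset V} : T ∈ G.cliquesIn W s ↔ T ⊆ W ∧ G.IsNClique s T := by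
  simp [SimpleGraph.cliquesIn]

/-- Each `s`-clique inside `W` has at least `|W| - s a` extensions inside `W`, while an
`(s + 1)`-clique extends at most `s + 1` cliques of order `s`. -/
lemma card_cliquesIn_succ {V : Type*} [Fintype V] [DecidableEq V] (G : SimpleGraph V)
    [DecidableRel G.Adj] (W : Finset V) (a : ℕ)
    (ha : ∀ v, #{w | ¬ G.Adj v w} ≤ a) (s : ℕ) :
    #(G.cliquesIn W s) * (#W - s * a) ≤ #(G.cliquesIn W (s + 1)) * (s + 1) := by
  classical
  refine card_mul_le_card_mul (fun S T : Finset V => S ⊆ T) ?_ ?_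
  · intro S hS
    rw [mem_cliquesIn] at hS
    obtain ⟨hSW, hS⟩ := hS
    set N : Finset V := W.filter fun w => ∀ x ∈ S, G.Adj x w with hN
    have hcard : #W - s * a ≤ #N := by
      have h1 : W \ N ⊆ S.biUnion fun x => {w | ¬ G.Adj x w} := by
        intro w hw
        simp only [hN, mem_sdiff, mem_filter, not_and, not_forall] at hw
        obtain ⟨x, hx, hxw⟩ := hw.2 hw.1
        simp only [mem_biUnion, mem_filter, mem_univ, true_and]
        exact ⟨x, hx, hxw⟩
      have h2 : #(W \ N) ≤ s * a := by
        refine (card_le_card h1).trans ?_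
        rw [← hS.card_eq]
        exact card_biUnion_le_card_mul _ _ _ fun x _ => ha x
      have h3 := le_card_sdiff N W
      omega
    refine hcard.trans ?_
    have hnot : ∀ w ∈ N, w ∉ S := fun w hw hwS =>
      G.irrefl ((mem_filter.1 hw).2 w hwS)
    refine card_le_card_of_injOn (fun w => insert w S) ?_ ?_
    · intro w hw
      have hw' := mem_filter.1 (mem_coe.1 hw)
      simp only [bipartiteAbove, coe_filter, Set.mem_ofPred_eq, mem_cliquesIn]
      refine ⟨⟨insert_subset hw'.1 hSW, hS.insert fun b hb => (hw'.2 b hb).symm⟩,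
        subset_insert _ _⟩
    · intro w hw w' hw' h
      exact (insert_inj (hnot w hw)).1 h
  · intro T hT
    rw [mem_cliquesIn] at hT
    have : (G.cliquesIn W s).bipartiteBelow (fun S T : Finset V => S ⊆ T) T
        ⊆ T.powersetCard s := by
      intro S hS
      simp only [bipartiteBelow, mem_filter, mem_cliquesIn] at hS
      exact mem_powersetCard.2 ⟨hS.2, hS.1.2.card_eq⟩
    refine (card_le_card this).trans ?_
    rw [card_powersetCard, hT.2.card_eq, Nat.choose_succ_self_right]

/-- Averaging the codegrees over the pairs of vertices of a clique of order `r + 1`. -/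
lemma exists_large_codegree {V : Type*} [Fintype V] [DecidableEq V] (G : SimpleGraph V)
    [DecidableRel G.Adj] (r : ℕ) (hr : 2 ≤ r) (K : Finset V) (hK : G.IsNClique (r + 1) K)
    (hδ : (1 - 1 / (r : ℝ) - 1 / (r : ℝ) ^ 4) * Fintype.card V < G.minDegree) :
    ∃ u v, G.Adj u v ∧
      (1 - 2 / (r : ℝ) + ((r : ℝ) ^ 2 - r - 1) / (r : ℝ) ^ 5) * Fintype.card V
        < #{x | G.Adj u x ∧ G.Adj v x} := by
  classical
  by_contra! hcon
  set M : ℝ := (1 - 2 / (r : ℝ) + ((r : ℝ) ^ 2 - r - 1) / (r : ℝ) ^ 5) * Fintype.card V with hM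
  set d : V → ℕ := fun x => #{u ∈ K | G.Adj u x} with hd
  have hr' : (2 : ℝ) ≤ r := by exact_mod_cast hr
  have hsum1 : ((r : ℝ) + 1) * G.minDegree ≤ ∑ x, (d x : ℝ) := by
    have h : ∑ x, d x = ∑ u ∈ K, G.degree u := by
      have := sum_card_bipartiteAbove_eq_sum_card_bipartiteBelow (s := K) (t := univ) G.Adj
      simp only [bipartiteAbove, bipartiteBelow] at this
      rw [← this]
      refine sum_congr rfl fun u _ => ?_
      rw [← G.card_neighborFinset_eq_degree, G.neighborFinset_eq_filter]
    have h2 : (r + 1) * G.minDegree ≤ ∑ x, d x := by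
      rw [h, ← hK.card_eq, ← smul_eq_mul]
      exact card_nsmul_le_sum _ _ _ fun u _ => G.minDegree_le_degree u
    exact_mod_cast h2
  have hsum2 : ∑ x, ((d x : ℝ) * d x - d x) ≤ (r : ℝ) * (r + 1) * M := by
    have h : ∑ x, (d x * d x - d x)
        = ∑ p ∈ K.offDiag, #{x | G.Adj p.1 x ∧ G.Adj p.2 x} := by
      have := sum_card_bipartiteAbove_eq_sum_card_bipartiteBelow (s := K.offDiag)
        (t := (univ : Finset V)) (fun p x => G.Adj p.1 x ∧ G.Adj p.2 x)
      simp only [bipartiteAbove, bipartiteBelow] at this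
      rw [this]
      refine sum_congr rfl fun x _ => ?_
      rw [hd, ← offDiag_card]
      congr 1
      ext p
      simp only [mem_offDiag, mem_filter]
      tauto
    have h' : ∑ x, ((d x : ℝ) * d x - d x)
        = ∑ p ∈ K.offDiag, (#{x | G.Adj p.1 x ∧ G.Adj p.2 x} : ℝ) := by
      rw [← Nat.cast_sum, ← h, Nat.cast_sum]
      refine sum_congr rfl fun x _ => ?_
      rw [Nat.cast_sub (Nat.le_mul_self _), Nat.cast_mul]
    rw [h']
    have h3 : ∀ p ∈ K.offDiag, (#{x | G.Adj p.1 x ∧ G.Adj p.2 x} : ℝ) ≤ M := by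
      intro p hp
      rw [mem_offDiag] at hp
      exact hcon _ _ (hK.isClique hp.1 hp.2.1 hp.2.2)
    refine (sum_le_card_nsmul _ _ _ h3).trans (le_of_eq ?_)
    rw [offDiag_card, hK.card_eq, nsmul_eq_mul, Nat.cast_sub (Nat.le_mul_self _)]
    push_cast
    ring
  -- the chord of `d ↦ d (d - 1)` through `r - 1` and `r` lies below it at all integers
  have hchord : ∀ x, 2 * ((r : ℝ) - 1) * d x - r * (r - 1) ≤ (d x : ℝ) * d x - d x := by
    intro x
    have h : 0 ≤ ((d x : ℝ) - r) * (d x - r + 1) := by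
      rcases lt_or_ge (d x) r with h | h
      · have h : (d x : ℝ) + 1 ≤ r := by exact_mod_cast h
        nlinarith
      · have h : (r : ℝ) ≤ d x := by exact_mod_cast h
        nlinarith
    nlinarith
  have hmain := sum_le_sum fun x (_ : x ∈ univ) => hchord x
  rw [sum_sub_distrib, ← mul_sum, sum_const, card_univ, nsmul_eq_mul] at hmain
  have hn : (0 : ℝ) < Fintype.card V := by
    have : 0 < #K := by rw [hK.card_eq]; omega
    exact_mod_cast this.trans_le (card_le_univ K)
  generalize (Fintype.card V : ℝ) = n at *
  generalize (G.minDegree : ℝ) = δ at *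
  generalize (r : ℝ) = r at *
  have hr0 : 0 < r := by linarith
  have h1 : 2 * (r - 1) * ((r + 1) * ((1 - 1 / r - 1 / r ^ 4) * n)) - n * (r * (r - 1))
      ≤ r * (r + 1) * M := by
    have : 2 * (r - 1) * ((r + 1) * ((1 - 1 / r - 1 / r ^ 4) * n))
        ≤ 2 * (r - 1) * ∑ x, (d x : ℝ) := by
      refine mul_le_mul_of_nonneg_left (le_trans ?_ hsum1) (by linarith)
      exact mul_le_mul_of_nonneg_left hδ.le (by linarith)
    linarith
  have h2 : 2 * (r - 1) * ((r + 1) * ((1 - 1 / r - 1 / r ^ 4) * n)) - n * (r * (r - 1))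
      - r * (r + 1) * M = n * (r * (r - 1) ^ 2 + r + 3) / r ^ 4 := by
    rw [hM]
    field_simp
    ring
  have h3 : 0 < n * (r * (r - 1) ^ 2 + r + 3) / r ^ 4 := by positivity
  linarith

/-- Adjoining the ends of an edge `uv` to the cliques in its common neighbourhood gives a joint. -/
lemma card_cliquesIn_le_jointSize {V : Type*} [Fintype V] [DecidableEq V] (G : SimpleGraph V)
    [DecidableRel G.Adj] (u v : V) (huv : G.Adj u v) (s : ℕ) :
    #(G.cliquesIn {x | G.Adj u x ∧ G.Adj v x} s) ≤ G.jointSize (s + 2) := by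
  classical
  set W : Finset V := {x | G.Adj u x ∧ G.Adj v x} with hW
  have hadj : ∀ {T}, T ∈ G.cliquesIn W s → ∀ x ∈ T, G.Adj u x ∧ G.Adj v x := by
    intro T hT x hx
    have := (mem_cliquesIn.1 hT).1 hx
    simpa [hW] using this
  have huT : ∀ {T}, T ∈ G.cliquesIn W s → u ∉ insert v T := by
    intro T hT h
    rcases mem_insert.1 h with h | h
    · exact huv.ne h
    · exact G.irrefl (hadj hT u h).1
  have hvT : ∀ {T}, T ∈ G.cliquesIn W s → v ∉ T := fun hT h => G.irrefl (hadj hT v h).2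
  refine le_csSup ⟨Fintype.card (Finset V), ?_⟩ ⟨u, v, huv,
    (G.cliquesIn W s).image fun T => insert u (insert v T), ?_, ?_⟩
  · rintro t ⟨-, -, -, S, rfl, -⟩
    exact card_le_univ S
  · refine card_image_of_injOn fun T hT T' hT' h => ?_
    have h1 := congrArg (fun A => (A.erase u).erase v) h
    simpa [erase_insert (huT hT), erase_insert (huT hT'), erase_insert (hvT hT),
      erase_insert (hvT hT')] using h1
  · intro A hA
    obtain ⟨T, hT, rfl⟩ := mem_image.1 hA
    refine ⟨((mem_cliquesIn.1 hT).2.insert fun b hb => (hadj hT b hb).2).insert ?_,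
      by simp, by simp⟩
    intro b hb
    rcases mem_insert.1 hb with rfl | hb
    · exact huv
    · exact (hadj hT b hb).1

/-- Let `r ≥ 2` and `G` be a graph of order `n`. If `G` contains a clique of order
`r + 1` and `δ(G) > (1 - 1/r - 1/r⁴)n`, then `js_(r+1)(G) > n^(r-1)/r^(r+3)`. -/
theorem joints_of_min_degree {V : Type*} [Fintype V] [DecidableEq V] (r n : ℕ)
    (hr : 2 ≤ r) (G : SimpleGraph V) (hcard : Fintype.card V = n)
    (hclique : ∃ t : Finset V, G.IsNClique (r + 1) t)
    (hδ : (1 - 1 / (r : ℝ) - 1 / (r : ℝ) ^ 4) * n < (G.minDeg : ℝ)) :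
    (n : ℝ) ^ (r - 1) / (r : ℝ) ^ (r + 3) < (G.jointSize (r + 1) : ℝ) := by
  let _ := Classical.decRel G.Adj
  have hmin : G.minDeg = G.minDegree := rfl
  rw [hmin] at hδ
  obtain ⟨K, hK⟩ := hclique
  subst hcard
  obtain ⟨u, v, huv, hcodeg⟩ := exists_large_codegree G r hr K hK hδ
  obtain ⟨q, rfl⟩ := Nat.exists_eq_add_of_le' hr
  refine lt_of_lt_of_le ?_ (Nat.cast_le.2 (card_cliquesIn_le_jointSize G u v huv (q + 1)))
  set W : Finset V := {x | G.Adj u x ∧ G.Adj v x} with hW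
  set n : ℕ := Fintype.card V with hn
  have hn0 : (0 : ℝ) < n := by
    have : 0 < #K := by rw [hK.card_eq]; omega
    exact_mod_cast this.trans_le (card_le_univ K)
  have hdeg : ∀ x, #{w | ¬ G.Adj x w} ≤ n - G.minDegree := by
    intro x
    have h1 := card_filter_add_card_filter_not (s := (univ : Finset V)) (fun w => G.Adj x w)
    have h2 := G.minDegree_le_degree x
    rw [← G.card_neighborFinset_eq_degree, G.neighborFinset_eq_filter] at h2
    rw [card_univ] at h1
    omega
  have hle : G.minDegree ≤ n := (G.minDegree_le_degree u).trans (G.degree_lt_card_verts u).le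
  have hstep := card_cliquesIn_succ G W _ hdeg
  set a := n - G.minDegree with ha
  have haR : (a : ℝ) < (1 / ((q + 2 : ℕ) : ℝ) + 1 / ((q + 2 : ℕ) : ℝ) ^ 4) * n := by
    rw [ha, Nat.cast_sub hle]; linarith
  have hstepR : ∀ s : ℕ, (#(G.cliquesIn W s) : ℝ) * (#W - s * a)
      ≤ #(G.cliquesIn W (s + 1)) * (s + 1) := by
    intro s
    have h : ((#W : ℝ) - s * a) ≤ ((#W - s * a : ℕ) : ℝ) := by
      rw [sub_le_iff_le_add]
      exact_mod_cast le_tsub_add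
    refine (mul_le_mul_of_nonneg_left h (Nat.cast_nonneg _)).trans ?_
    exact_mod_cast hstep s
  set R : ℝ := ((q + 2 : ℕ) : ℝ) with hR
  have hRdef : R = (q : ℝ) + 2 := by rw [hR]; push_cast; ring
  have hqR : (q : ℝ) = R - 2 := by rw [hRdef]; ring
  have hR2 : 2 ≤ R := by rw [hRdef]; linarith [(Nat.cast_nonneg q : (0 : ℝ) ≤ q)]
  have hR0 : 0 < R := by linarith
  have hext : ∀ s : ℕ, s ≤ q → ((q : ℝ) - s) * (n / R) + (R - 1) * n / R ^ 5 < #W - s * a := by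
    intro s hs
    have hs' : (s : ℝ) ≤ R - 2 := by rw [← hqR]; exact_mod_cast hs
    have h1 : (s : ℝ) * a ≤ s * ((1 / R + 1 / R ^ 4) * n) :=
      mul_le_mul_of_nonneg_left haR.le (Nat.cast_nonneg s)
    have h2 : (1 - 2 / R + (R ^ 2 - R - 1) / R ^ 5) * n - s * ((1 / R + 1 / R ^ 4) * n)
        = ((q : ℝ) - s) * (n / R) + (R - 1) * n / R ^ 5 + (R - 2 - s) * n / R ^ 4 := by
      rw [hqR]
      field_simp
      ring
    have h3 : 0 ≤ (R - 2 - s) * n / R ^ 4 := by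
      have : 0 ≤ R - 2 - s := by linarith
      positivity
    linarith
  have hε : 0 < (R - 1) * n / R ^ 5 := by
    have : 0 < R - 1 := by linarith
    positivity
  have hcount : ∀ s : ℕ, s ≤ q →
      (q.choose s : ℝ) * (n / R) ^ s ≤ #(G.cliquesIn W s) := by
    intro s
    induction s with
    | zero =>
      intro _
      have : 0 < #(G.cliquesIn W 0) := card_pos.2 ⟨∅, mem_cliquesIn.2 ⟨by simp, by simp⟩⟩
      simpa using Nat.succ_le_of_lt this
    | succ s ih =>
      intro hs
      have ih := ih (by omega)
      have h1 := hext s (by omega)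
      have hc : (q.choose (s + 1) : ℝ) * (s + 1) = q.choose s * (q - s) := by
        have := Nat.choose_succ_right_eq q s
        rw [← Nat.cast_sub (by omega)]
        exact_mod_cast this
      have hqs : (0 : ℝ) ≤ q - s := by
        rw [sub_nonneg]; exact_mod_cast (by omega : s ≤ q)
      refine le_of_mul_le_mul_right (le_trans ?_ (hstepR s)) (by positivity : (0 : ℝ) < s + 1)
      calc (q.choose (s + 1) : ℝ) * (n / R) ^ (s + 1) * (s + 1)
          = (q.choose (s + 1) : ℝ) * (s + 1) * (n / R) ^ (s + 1) := by ring
        _ = (q.choose s : ℝ) * (n / R) ^ s * ((q - s) * (n / R)) := by rw [hc]; ring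
        _ ≤ #(G.cliquesIn W s) * (#W - s * a) := by
          refine mul_le_mul ih (by linarith) (by positivity) (Nat.cast_nonneg _)
  have hq := hcount q le_rfl
  rw [Nat.choose_self, Nat.cast_one, one_mul] at hq
  have hlast := hext q le_rfl
  rw [sub_self, zero_mul, zero_add] at hlast
  have hfin := hstepR q
  have hq1 : (q : ℝ) + 1 = R - 1 := by rw [hqR]; ring
  rw [hq1] at hfin
  have hR1 : 0 < R - 1 := by linarith
  have hpos : 0 < ((n : ℝ) / R) ^ q := by positivity
  refine lt_of_mul_lt_mul_right (lt_of_lt_of_le ?_ hfin) hR1.le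
  calc (n : ℝ) ^ (q + 2 - 1) / R ^ (q + 2 + 3) * (R - 1)
      = (n / R) ^ q * ((R - 1) * n / R ^ 5) := by
        rw [show q + 2 - 1 = q + 1 by omega, div_pow, pow_succ, show q + 2 + 3 = q + 5 by omega,
          pow_add R q 5]
        field_simp
    _ < (n / R) ^ q * (#W - q * a) := mul_lt_mul_of_pos_left hlast hpos
    _ ≤ #(G.cliquesIn W q) * (#W - q * a) :=
        mul_le_mul_of_nonneg_right hq (hε.trans hlast).le
end

section
/- Let r ≥ 2, let c satisfy 2/ln n ≤ c ≤ r^{-(r+8)r}, and let G be a graph of order n. If G contains a clique of order r+1 and δ(G) > (1 − 1/r − 1/r⁴)n, then G contains a copy of K_r^+(⌊c ln n⌋, …, ⌊c ln n⌋, ⌈n^{1−cr³}⌉). -/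
/-- `G` contains a copy of the complete multipartite graph whose parts have
sizes `s 0, …, s (r-1)`, with one extra edge added inside part `i₀`. -/
def SimpleGraph.ContainsKPartitePlus {V : Type*} (G : SimpleGraph V) {r : ℕ}
    (s : Fin r → ℕ) (i₀ : Fin r) : Prop :=
  ∃ A : Fin r → Finset V,
    (Pairwise fun i j => Disjoint (A i) (A j)) ∧
    (∀ i, (A i).card = s i) ∧
    (∀ i j, i ≠ j → ∀ x ∈ A i, ∀ y ∈ A j, G.Adj x y) ∧
    (∃ x ∈ A i₀, ∃ y ∈ A i₀, x ≠ y ∧ G.Adj x y)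

/-! ### A pigeonhole step for dense set systems -/

open Finset in
/-- Pigeonhole step: among `D * m` sets of density at least `γ ≥ 2 / D`, some `m` have a common
intersection of size at least `n / (D * C(D * m, m))`. By double counting, at least `n / D` points
lie in `m` or more of the sets, and each of them selects an `m`-set of indices. -/
theorem exists_card_inter_ge {V : Type*} [Fintype V] [DecidableEq V] {D m : ℕ} {γ : ℝ}
    (hD : 2 ≤ D * γ) (hm : 0 < m) (N : Fin (D * m) → Finset V)
    (hN : ∀ j, γ * Fintype.card V ≤ (N j).card) :
    ∃ J : Finset (Fin (D * m)), J.card = m ∧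
      Fintype.card V ≤ D * (D * m).choose m * (univ.filter fun x => ∀ j ∈ J, x ∈ N j).card := by
  classical
  have hD0 : 0 < D := by
    rcases Nat.eq_zero_or_pos D with h | h
    · subst h; norm_num at hD
    · exact h
  set n := Fintype.card V
  set d : V → ℕ := fun x => (univ.filter fun j => x ∈ N j).card with hd
  set g : Finset V := univ.filter fun x => m ≤ d x with hg
  have hsum : ∑ j, (N j).card = ∑ x, d x := by
    simp only [hd, card_filter]
    rw [sum_comm]
    refine sum_congr rfl fun j _ => ?_
    simp
  have hle : ∑ x, d x ≤ g.card * (D * m) + n * m := by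
    calc ∑ x, d x ≤ ∑ x : V, ((if m ≤ d x then D * m else 0) + m) := by
          refine sum_le_sum fun x _ => ?_
          split_ifs with h
          · have : d x ≤ D * m := by simpa using card_le_univ (univ.filter fun j => x ∈ N j)
            omega
          · omega
      _ = _ := by
          rw [sum_add_distrib, ← sum_filter]; simp [hg, n]
  have hge : (D * m : ℝ) * (γ * n) ≤ ∑ j, ((N j).card : ℝ) := by
    have := sum_le_sum (s := univ) fun j (_ : j ∈ univ) => hN j
    simpa using this
  -- The points outside `g` contribute at most `n * m`, which is at most half of `D * m * γ * n`.
  have hgn : n ≤ D * g.card := by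
    have h1 : (D * m : ℝ) * (γ * n) ≤ g.card * (D * m) + n * m := by
      refine hge.trans ?_
      exact_mod_cast hsum ▸ hle
    have h2 : (2 : ℝ) * (n * m) ≤ D * γ * (n * m) := by gcongr
    have h3 : (m : ℝ) * n ≤ m * (D * g.card) := by nlinarith
    exact Nat.le_of_mul_le_mul_left (by exact_mod_cast h3) hm
  have hsub : ∀ x ∈ g, ∃ J ⊆ (univ.filter fun j => x ∈ N j), J.card = m := fun x hx =>
    exists_subset_card_eq (by simpa [hg] using hx)
  choose! f hf1 hf2 using hsub
  have hmaps : ∀ x ∈ g, f x ∈ powersetCard m (univ : Finset (Fin (D * m))) := fun x hx => by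
    simp [mem_powersetCard, hf2 x hx]
  have hne : (powersetCard m (univ : Finset (Fin (D * m)))).Nonempty := by
    rw [powersetCard_nonempty]; simp; nlinarith
  obtain ⟨J, hJ, hJc⟩ : ∃ J ∈ powersetCard m (univ : Finset (Fin (D * m))),
      g.card ≤ (powersetCard m (univ : Finset (Fin (D * m)))).card *
        (g.filter fun x => f x = J).card := by
    by_contra! hcon
    have h1 := card_eq_sum_card_fiberwise hmaps
    have hlt := sum_lt_sum_of_nonempty hne hcon
    rw [sum_const, ← mul_sum, ← h1, smul_eq_mul] at hlt
    exact lt_irrefl _ hlt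
  refine ⟨J, (mem_powersetCard.1 hJ).2, hgn.trans ?_⟩
  rw [mul_assoc]
  refine Nat.mul_le_mul_left _ (hJc.trans ?_)
  rw [card_powersetCard, card_univ, Fintype.card_fin]
  refine Nat.mul_le_mul_left _ (card_le_card fun x hx => ?_)
  simp only [mem_filter, mem_univ, true_and] at hx ⊢
  intro j hj
  have := hf1 x hx.1 (hx.2 ▸ hj)
  simpa using this

/-! ### Blow-ups of cliques as families of columns -/

/-- The columns `q 0, …, q (m - 1)` form a blow-up of a clique on the index set `I`: for each
`i ∈ I` the vertices `q j i` are distinct, and vertices with different indices in `I` are adjacent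
whether or not they lie in the same column. The values `q j i` with `i ∉ I` are irrelevant. A
column is a function on all of `ℕ` so that a coordinate can be added with `Function.update`. -/
def SimpleGraph.IsBlowup {V : Type*} (G : SimpleGraph V) {m : ℕ} (q : Fin m → ℕ → V)
    (I : Finset ℕ) : Prop :=
  (∀ i ∈ I, Function.Injective fun j => q j i) ∧
    ∀ i ∈ I, ∀ i' ∈ I, i ≠ i' → ∀ j j', G.Adj (q j i) (q j' i')

/-- A set `T` joined to every column in `J` supplies a new part: distinct vertices of `T` are
assigned to the columns in `J` as the coordinate `a`. -/
theorem SimpleGraph.IsBlowup.extend {V : Type*} {G : SimpleGraph V} {M m : ℕ}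
    {q : Fin M → ℕ → V} {I : Finset ℕ} (hq : G.IsBlowup q I) {a : ℕ} (ha : a ∉ I)
    {J : Finset (Fin M)} (hJ : J.card = m) {T : Finset V} (hT : m ≤ T.card)
    (hadj : ∀ j ∈ J, ∀ x ∈ T, ∀ i ∈ I, G.Adj x (q j i)) :
    ∃ q' : Fin m → ℕ → V, G.IsBlowup q' (insert a I) ∧
      ∀ j, q' j a ∈ T ∧ ∃ j₀ ∈ J, ∀ i ∈ I, q' j i = q j₀ i := by
  classical
  obtain ⟨T', hT', hT'c⟩ := Finset.exists_subset_card_eq hT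
  let e := J.equivFinOfCardEq hJ
  let y := T'.equivFinOfCardEq hT'c
  have hne : ∀ i ∈ I, i ≠ a := fun i hi h => ha (h ▸ hi)
  refine ⟨fun j => Function.update (q (e.symm j)) a (y.symm j), ⟨?_, ?_⟩, ?_⟩
  · intro i hi j j' h
    rcases Finset.mem_insert.1 hi with rfl | hi
    · simpa [Subtype.coe_inj] using h
    · simp only [Function.update_of_ne (hne i hi)] at h
      exact e.symm.injective (Subtype.ext (hq.1 i hi h))
  · intro i hi i' hi' hii j j'
    rcases Finset.mem_insert.1 hi with hia | hiI <;>
      rcases Finset.mem_insert.1 hi' with hia' | hiI'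
    · exact absurd (hia.trans hia'.symm) hii
    · subst hia
      simp only [Function.update_self, Function.update_of_ne (hne i' hiI')]
      exact hadj _ (e.symm j').2 _ (hT' (y.symm j).2) _ hiI'
    · subst hia'
      simp only [Function.update_self, Function.update_of_ne (hne i hiI)]
      exact (hadj _ (e.symm j).2 _ (hT' (y.symm j').2) _ hiI).symm
    · simp only [Function.update_of_ne (hne i hiI), Function.update_of_ne (hne i' hiI')]
      exact hq.2 i hiI i' hiI' hii _ _
  · intro j
    refine ⟨by simpa using hT' (y.symm j).2, e.symm j, (e.symm j).2, fun i hi => ?_⟩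
    simp [Function.update_of_ne (hne i hi)]

/-- One growth step: if each column `j` has a dense set `N j` of vertices joined to it, a
`1 / D` fraction of the columns can be extended, each by a vertex which is in `N` of that
very column. -/
theorem SimpleGraph.IsBlowup.grow {V : Type*} [Fintype V] [DecidableEq V] {G : SimpleGraph V}
    {D m : ℕ} {γ : ℝ} (hD : 2 ≤ D * γ) (hm : 0 < m) {q : Fin (D * m) → ℕ → V} {I : Finset ℕ}
    (hq : G.IsBlowup q I) {a : ℕ} (ha : a ∉ I) (N : Fin (D * m) → Finset V)
    (hN : ∀ j, γ * Fintype.card V ≤ (N j).card)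
    (hadj : ∀ j, ∀ x ∈ N j, ∀ i ∈ I, G.Adj x (q j i))
    (hbig : 4 ^ (D * m) ≤ Fintype.card V) :
    ∃ q' : Fin m → ℕ → V, G.IsBlowup q' (insert a I) ∧
      ∀ j, ∃ j₀, q' j a ∈ N j₀ ∧ ∀ i ∈ I, q' j i = q j₀ i := by
  classical
  obtain ⟨J, hJ, hc⟩ := exists_card_inter_ge hD hm N hN
  set T := Finset.univ.filter fun x => ∀ j ∈ J, x ∈ N j with hTdef
  have hT : m ≤ T.card := by
    have h1 : D * m * 2 ^ (D * m) ≤ 4 ^ (D * m) := by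
      rw [show (4 : ℕ) = 2 * 2 by norm_num, mul_pow]
      exact Nat.mul_le_mul_right _ Nat.lt_two_pow_self.le
    have hD0 : 0 < D := by
      rcases Nat.eq_zero_or_pos D with h | h
      · subst h; norm_num at hD
      · exact h
    have h2 : D * (D * m).choose m * T.card ≤ D * 2 ^ (D * m) * T.card :=
      Nat.mul_le_mul_right _ (Nat.mul_le_mul_left _ (Nat.choose_le_two_pow _ _))
    have h3 : D * 2 ^ (D * m) * m ≤ D * 2 ^ (D * m) * T.card := by
      calc _ = D * m * 2 ^ (D * m) := by ring
        _ ≤ _ := (h1.trans hbig).trans (hc.trans h2)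
    exact Nat.le_of_mul_le_mul_left h3 (by positivity)
  have hTN : ∀ j ∈ J, ∀ x ∈ T, x ∈ N j := fun j hj x hx => by
    simp only [hTdef, Finset.mem_filter, Finset.mem_univ, true_and] at hx; exact hx j hj
  obtain ⟨q', h1, h2⟩ := hq.extend ha hJ hT fun j hj x hx i hi => hadj j x (hTN j hj x hx) i hi
  refine ⟨q', h1, fun j => ?_⟩
  obtain ⟨h3, j₀, hj₀, h4⟩ := h2 j
  exact ⟨j₀, hTN j₀ hj₀ _ h3, h4⟩

/-! ### Degree conditions and common neighbourhoods -/

open Classical in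
/-- The vertices of `U` adjacent to all `f i` with `i ∈ I`. -/
noncomputable def SimpleGraph.commonIn {V : Type*} (G : SimpleGraph V) (U : Finset V)
    (I : Finset ℕ) (f : ℕ → V) : Finset V :=
  U.filter fun x => ∀ i ∈ I, G.Adj x (f i)

theorem SimpleGraph.mem_commonIn {V : Type*} {G : SimpleGraph V} {U : Finset V}
    {I : Finset ℕ} {f : ℕ → V} {x : V} :
    x ∈ G.commonIn U I f ↔ x ∈ U ∧ ∀ i ∈ I, G.Adj x (f i) := by
  simp [SimpleGraph.commonIn]

open Classical Finset in
/-- If every vertex has at most `B` non-neighbours (itself included), then at most `|I| * B`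
vertices of `U` fail to be common neighbours of `f i`, `i ∈ I`. -/
theorem SimpleGraph.card_common_ge {V : Type*} [Fintype V] {G : SimpleGraph V} {B : ℝ}
    (hB : ∀ v, (univ.filter fun x => ¬ G.Adj x v).card ≤ B) (U : Finset V) (I : Finset ℕ)
    (f : ℕ → V) :
    U.card - I.card * B ≤ (G.commonIn U I f).card := by
  induction I using Finset.induction_on with
  | empty => simp [commonIn]
  | insert a I ha ih =>
    have h1 : G.commonIn U I f ⊆
        G.commonIn U (insert a I) f ∪
          (univ.filter fun x => ¬ G.Adj x (f a)) := by
      intro x hx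
      simp only [mem_commonIn, mem_filter, mem_union, mem_insert, forall_eq_or_imp, mem_univ,
        true_and] at hx ⊢
      tauto
    have h2 : ((G.commonIn U I f).card : ℝ) ≤
        (G.commonIn U (insert a I) f).card +
          (univ.filter fun x => ¬ G.Adj x (f a)).card := by
      exact_mod_cast (card_le_card h1).trans (card_union_le _ _)
    rw [card_insert_of_notMem ha]
    push_cast
    have := hB (f a)
    linarith

open Classical Finset in
/-- Some edge `uv` of an `(r + 1)`-clique has a large common neighbourhood. With `d x` the number
of neighbours of `x` in the clique, the sum of the codegrees over ordered pairs is
`∑ x, d x * (d x - 1)`, and it is bounded below in terms of `∑ x, d x` by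
`(d x - r) * (d x - r + 1) ≥ 0`, valid since `d x` is an integer. -/
theorem SimpleGraph.exists_edge_codegree {V : Type*} [Fintype V] {G : SimpleGraph V} {B : ℝ}
    (hB : ∀ v, (univ.filter fun x => ¬ G.Adj x v).card ≤ B) {r : ℕ} (hr : 2 ≤ r)
    {K : Finset V} (hK : G.IsNClique (r + 1) K) :
    ∃ u v, G.Adj u v ∧ 2 * (r - 1) * (r + 1) * (Fintype.card V - B) - r * (r - 1) * Fintype.card V
      ≤ (r * (r + 1) : ℝ) * (univ.filter fun x => G.Adj x u ∧ G.Adj x v).card := by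
  set n := Fintype.card V
  set d : V → ℕ := fun x => (K.filter fun v => G.Adj x v).card with hd
  have hoff : (K.offDiag.card : ℝ) = r * (r + 1) := by
    rw [offDiag_card, hK.card_eq]
    have : (r + 1) * (r + 1) - (r + 1) = r * (r + 1) := by
      rw [Nat.sub_eq_iff_eq_add (by nlinarith)]; ring
    rw [this]; push_cast; ring
  have hsum1 : ∑ p ∈ K.offDiag, ((univ.filter fun x => G.Adj x p.1 ∧ G.Adj x p.2).card : ℝ)
      = ∑ x, ((d x : ℝ) * d x - d x) := by
    simp only [card_filter, Nat.cast_sum]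
    rw [sum_comm]
    refine sum_congr rfl fun x _ => ?_
    have h1 : (K.offDiag.filter fun p => G.Adj x p.1 ∧ G.Adj x p.2)
        = (K.filter fun v => G.Adj x v).offDiag := by
      ext p; simp only [mem_filter, mem_offDiag]; tauto
    rw [← Nat.cast_sum, ← card_filter, h1, offDiag_card,
      Nat.cast_sub (Nat.le_mul_self _)]
    push_cast; rfl
  have hsum2 : (r + 1 : ℝ) * (n - B) ≤ ∑ x, (d x : ℝ) := by
    have h1 : ∑ x, (d x : ℝ) = ∑ v ∈ K, ((univ.filter fun x => G.Adj x v).card : ℝ) := by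
      simp only [hd, card_filter, Nat.cast_sum]
      rw [sum_comm]
    have h2 : ∀ v ∈ K, (n : ℝ) - B ≤ (univ.filter fun x => G.Adj x v).card := fun v _ => by
      have h3 := card_filter_add_card_filter_not (s := (univ : Finset V)) (fun x => G.Adj x v)
      rw [card_univ] at h3
      have h4 : ((univ.filter fun x => G.Adj x v).card : ℝ) +
        (univ.filter fun x => ¬ G.Adj x v).card = n := by exact_mod_cast h3
      have := hB v
      linarith
    have h3 := sum_le_sum h2
    rw [sum_const, hK.card_eq, nsmul_eq_mul] at h3
    rw [h1]; push_cast at h3; exact h3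
  have hsum3 : 2 * (r - 1) * (∑ x, (d x : ℝ)) - r * (r - 1) * n ≤ ∑ x, ((d x : ℝ) * d x - d x) := by
    have : ∀ x ∈ (univ : Finset V), (2 * (r - 1) * (d x : ℝ) - r * (r - 1)) ≤ d x * d x - d x := by
      intro x _
      have hint : (0 : ℤ) ≤ ((d x : ℤ) - r) * (d x - r + 1) := by
        rcases le_or_gt (r : ℤ) (d x) with h | h
        · exact mul_nonneg (by linarith) (by linarith)
        · exact mul_nonneg_of_nonpos_of_nonpos (by linarith) (by linarith)
      have hreal : (0 : ℝ) ≤ ((d x : ℝ) - r) * (d x - r + 1) := by exact_mod_cast hint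
      nlinarith
    have h := sum_le_sum this
    rw [sum_sub_distrib, ← mul_sum, sum_const, card_univ, nsmul_eq_mul] at h
    linarith
  have hne : K.offDiag.Nonempty := by
    rw [← card_pos]
    have : (0 : ℝ) < K.offDiag.card := by rw [hoff]; positivity
    exact_mod_cast this
  obtain ⟨p, hp, hpc⟩ := exists_le_of_sum_le (s := K.offDiag)
    (f := fun _ => (2 * (r - 1) * (r + 1) * (n - B) - r * (r - 1) * n) / (r * (r + 1) : ℝ)) hne (by
      rw [hsum1, sum_const, nsmul_eq_mul, hoff, mul_div_cancel₀ _ (by positivity)]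
      refine le_trans ?_ hsum3
      have : (2 : ℝ) * (r - 1) * ((r + 1) * (n - B)) ≤ 2 * (r - 1) * ∑ x, (d x : ℝ) := by
        have : (2 : ℝ) ≤ r := by exact_mod_cast hr
        exact mul_le_mul_of_nonneg_left hsum2 (by linarith)
      linarith)
  rw [mem_offDiag] at hp
  refine ⟨p.1, p.2, hK.isClique hp.1 hp.2.1 hp.2.2, ?_⟩
  rw [div_le_iff₀ (by positivity)] at hpc
  linarith

open Classical Finset in
/-- Markov-type bound: if each vertex of `Y` has at least `2 * l` neighbours in `X`, then at least
`l` vertices of `X` have at least `g` neighbours in `Y`, provided `g` is small against `l`. -/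
theorem SimpleGraph.card_rich_ge {V : Type*} [Fintype V] {G : SimpleGraph V} {X Y : Finset V}
    {l g : ℝ} (h : ∀ y ∈ Y, 2 * l ≤ (X.filter fun x => G.Adj y x).card) (hY : 0 < Y.card)
    (hg0 : 0 ≤ g) (hg : g * Fintype.card V ≤ l * Y.card) :
    l ≤ (X.filter fun x => g ≤ (Y.filter fun y => G.Adj y x).card).card := by
  set R := X.filter fun x => g ≤ ((Y.filter fun y => G.Adj y x).card : ℝ) with hR
  have hsum : ∑ y ∈ Y, ((X.filter fun x => G.Adj y x).card : ℝ)
      = ∑ x ∈ X, ((Y.filter fun y => G.Adj y x).card : ℝ) := by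
    simp only [card_filter, Nat.cast_sum]
    rw [sum_comm]
  have hlow := sum_le_sum h
  rw [sum_const, nsmul_eq_mul, hsum] at hlow
  have hup : ∑ x ∈ X, ((Y.filter fun y => G.Adj y x).card : ℝ)
      ≤ R.card * Y.card + Fintype.card V * g := by
    calc _ ≤ ∑ x ∈ X, ((if g ≤ ((Y.filter fun y => G.Adj y x).card : ℝ) then (Y.card : ℝ) else 0)
            + g) := by
          refine sum_le_sum fun x _ => ?_
          split_ifs with hx
          · have : ((Y.filter fun y => G.Adj y x).card : ℝ) ≤ Y.card := by
              exact_mod_cast card_filter_le _ _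
            linarith
          · linarith
      _ = R.card * Y.card + X.card * g := by
          rw [sum_add_distrib, ← sum_filter]; simp [hR]
      _ ≤ _ := by
          have : (X.card : ℝ) ≤ Fintype.card V := by exact_mod_cast card_le_univ X
          gcongr
  have hY' : (0 : ℝ) < Y.card := by exact_mod_cast hY
  by_contra! hcon
  have := mul_lt_mul_of_pos_right hcon hY'
  linarith

/-! ### Embedding the complete multipartite graph -/

open Classical Finset in
/-- The embedding: if every vertex misses at most `B` vertices and `W` exceeds `(r - 2) * B` by at
least `E`, there are `r - 1` completely joined parts of size `s`, all but the part `0` inside `W`,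
and a set `T ⊆ W` joined to all of them with `|T| ≥ n / (D * C(D * s, s))`. Each of the `r` growth
steps divides the number of columns by `D`, which is why `D ^ r * s` must be small against
`log n`. -/
theorem SimpleGraph.exists_blowup {V : Type*} [Fintype V] {G : SimpleGraph V} {B : ℝ}
    (hB : ∀ v, (univ.filter fun x => ¬ G.Adj x v).card ≤ B) {r D s : ℕ} (hr : 2 ≤ r)
    (hs : 0 < s) {E l γ : ℝ} (hγ : 0 < γ) (hD : 2 ≤ D * γ) {W : Finset V}
    (hW : (r - 2) * B + E ≤ W.card) (hl : 2 * l ≤ Fintype.card V - (r - 1) * B)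
    (hl0 : 0 ≤ l) (hE : γ * Fintype.card V ≤ E) (hγl : γ * Fintype.card V ≤ l)
    (hlE : γ * Fintype.card V * Fintype.card V ≤ l * E)
    (hbig : 4 ^ (D ^ r * s) ≤ Fintype.card V) :
    ∃ (q : Fin s → ℕ → V) (T : Finset V), G.IsBlowup q (range (r - 1)) ∧
      (∀ i ∈ range (r - 1), i ≠ 0 → ∀ j, q j i ∈ W) ∧ T ⊆ W ∧
      (∀ x ∈ T, ∀ j, ∀ i ∈ range (r - 1), G.Adj x (q j i)) ∧
      Fintype.card V ≤ D * (D * s).choose s * T.card := by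
  have hD0 : 0 < D := by
    rcases Nat.eq_zero_or_pos D with h | h
    · subst h; norm_num at hD
    · exact h
  have hn : 0 < Fintype.card V := lt_of_lt_of_le (by positivity) hbig
  have hnR : (0 : ℝ) < Fintype.card V := by exact_mod_cast hn
  have hB0 : 0 ≤ B := by
    obtain ⟨v⟩ := Fintype.card_pos_iff.1 hn
    exact (Nat.cast_nonneg _).trans (hB v)
  have hbig' : ∀ t, t < r → 4 ^ (D * (D ^ t * s)) ≤ Fintype.card V := fun t ht => by
    refine (Nat.pow_le_pow_right (by norm_num) ?_).trans hbig
    rw [← mul_assoc, ← pow_succ']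
    exact Nat.mul_le_mul_right _ (Nat.pow_le_pow_right hD0 ht)
  have hext : ∀ (k : ℕ), k ≤ r - 2 → ∀ f : ℕ → V,
      E ≤ (G.commonIn W (Icc 1 k) f).card := fun k hk f => by
    have h1 := card_common_ge hB W (Icc 1 k) f
    have h2 : ((Icc 1 k).card : ℝ) ≤ r - 2 := by
      rw [Nat.card_Icc, Nat.add_sub_cancel]
      have : k + 2 ≤ r := by omega
      have : (k + 2 : ℝ) ≤ r := by exact_mod_cast this
      linarith
    have h3 := mul_le_mul_of_nonneg_right h2 hB0
    linarith
  -- Parts `1, …, r - 2` are grown inside `W`, where any `r - 2` vertices or fewer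
  -- have at least `E` common neighbours.
  have stage1 : ∀ k t, k ≤ r - 2 → k + t = r → ∃ q : Fin (D ^ t * s) → ℕ → V,
      G.IsBlowup q (Icc 1 k) ∧ ∀ i ∈ Icc 1 k, ∀ j, q j i ∈ W := by
    intro k
    induction k with
    | zero =>
      intro t _ _
      obtain ⟨v⟩ := Fintype.card_pos_iff.1 hn
      exact ⟨fun _ _ => v, by simp [SimpleGraph.IsBlowup], by simp⟩
    | succ k ih =>
      intro t hk ht
      have hq := ih (t + 1) (by omega) (by omega)
      rw [show D ^ (t + 1) * s = D * (D ^ t * s) by ring] at hq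
      obtain ⟨q, hq, hqW⟩ := hq
      have hins : insert (k + 1) (Icc 1 k) = Icc 1 (k + 1) := by ext i; simp; omega
      obtain ⟨q', h1, h2⟩ := hq.grow hD (by positivity) (a := k + 1) (by simp)
        (fun j => G.commonIn W (Icc 1 k) (q j))
        (fun j => hE.trans (hext k (by omega) (q j)))
        (fun j x hx i hi => (mem_commonIn.1 hx).2 i hi) (hbig' t (by omega))
      rw [hins] at h1
      refine ⟨q', h1, fun i hi j => ?_⟩
      obtain ⟨j₀, h3, h4⟩ := h2 j
      rw [← hins] at hi
      rcases mem_insert.1 hi with rfl | hi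
      · exact (mem_commonIn.1 h3).1
      · rw [h4 i hi]; exact hqW i hi j₀
  have hq := stage1 (r - 2) 2 le_rfl (by omega)
  rw [show D ^ 2 * s = D * (D * s) by ring] at hq
  obtain ⟨q, hq, hqW⟩ := hq
  set I := Icc 1 (r - 2) with hI
  have hIc : (I.card : ℝ) = r - 2 := by
    rw [hI, Nat.card_Icc, Nat.add_sub_cancel, Nat.cast_sub hr]; norm_num
  have h0I : 0 ∉ I := by simp [hI]
  have hins : insert 0 I = range (r - 1) := by ext i; simp [hI]; omega
  -- The part `0` comes next, taken from the whole vertex set. Only those vertices are admitted that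
  -- leave the enlarged column with at least `γ * n` common neighbours in `W`: the degree condition
  -- alone does not make `r - 1` vertices have a common neighbour in `W`.
  let X := fun j => G.commonIn univ I (q j)
  let Y := fun j => G.commonIn W I (q j)
  obtain ⟨q₂, hq₂, hq₂N⟩ := hq.grow hD (by positivity) h0I
    (fun j => (X j).filter fun x =>
      γ * Fintype.card V ≤ ((Y j).filter fun y => G.Adj y x).card)
    (fun j => by
      have hYE : E ≤ (Y j).card := hext (r - 2) le_rfl (q j)
      refine hγl.trans (card_rich_ge (fun y hy => ?_) ?_ (by positivity) ?_)
      · refine hl.trans ?_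
        have h1 := card_common_ge hB univ (insert 0 I) (Function.update (q j) 0 y)
        rw [card_insert_of_notMem h0I, card_univ] at h1
        push_cast at h1
        rw [hIc] at h1
        refine le_trans (by linarith) (h1.trans ?_)
        norm_cast
        refine card_le_card fun x hx => ?_
        simp only [mem_commonIn, mem_filter, mem_univ, true_and, mem_insert, forall_eq_or_imp,
          Function.update_self, X] at hx ⊢
        refine ⟨fun i hi => ?_, hx.1.symm⟩
        have := hx.2 i hi
        rwa [Function.update_of_ne (show i ≠ 0 from fun h => h0I (h ▸ hi))] at this
      · have : (0 : ℝ) < (Y j).card := lt_of_lt_of_le (by positivity) (hE.trans hYE)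
        exact_mod_cast this
      · exact hlE.trans (by gcongr))
    (fun j x hx i hi => by
      simp only [mem_commonIn, mem_filter, mem_univ, true_and, X] at hx
      exact hx.1 i hi)
    (by simpa using hbig' 1 (by omega))
  rw [hins] at hq₂
  -- In the last step the whole common intersection is kept, to serve as the large part.
  obtain ⟨J, hJ, hJc⟩ := exists_card_inter_ge hD hs
    (fun j => G.commonIn W (range (r - 1)) (q₂ j))
    (fun j => by
      obtain ⟨j₀, h1, h2⟩ := hq₂N j
      rw [mem_filter] at h1
      refine h1.2.trans ?_
      norm_cast
      refine card_le_card fun y hy => ?_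
      rw [mem_filter] at hy
      have hy1 := mem_commonIn.1 hy.1
      refine mem_commonIn.2 ⟨hy1.1, fun i hi => ?_⟩
      rw [← hins] at hi
      rcases mem_insert.1 hi with rfl | hi
      · exact hy.2
      · rw [h2 i hi]; exact hy1.2 i hi)
  set T := univ.filter fun x => ∀ j ∈ J, x ∈ G.commonIn W (range (r - 1)) (q₂ j) with hT
  have hTJ : ∀ x ∈ T, ∀ j ∈ J, x ∈ G.commonIn W (range (r - 1)) (q₂ j) := fun x hx =>
    (mem_filter.1 hx).2
  let e := J.equivFinOfCardEq hJ
  have hj : ∃ j, j ∈ J := ⟨e.symm ⟨0, hs⟩, (e.symm ⟨0, hs⟩).2⟩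
  obtain ⟨j₁, hj₁⟩ := hj
  refine ⟨fun j => q₂ (e.symm j), T, ⟨fun i hi j j' h => ?_, fun i hi i' hi' hii j j' =>
    hq₂.2 i hi i' hi' hii _ _⟩, fun i hi hi0 j => ?_, fun x hx => ?_, fun x hx j i hi => ?_, ?_⟩
  · exact e.symm.injective (Subtype.ext (hq₂.1 i hi h))
  · obtain ⟨j₀, -, h2⟩ := hq₂N (e.symm j)
    rw [← hins] at hi
    have hiI := (mem_insert.1 hi).resolve_left hi0
    change q₂ (e.symm j) i ∈ W
    rw [h2 i hiI]
    exact hqW i hiI j₀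
  · exact (mem_commonIn.1 (hTJ x hx j₁ hj₁)).1
  · exact (mem_commonIn.1 (hTJ x hx _ (e.symm j).2)).2 i hi
  · exact hJc

/-! ### Numerical estimates -/

/-- Choice of the constant `D`: here `E * n` is the excess of the codegree found in
`SimpleGraph.exists_edge_codegree` over `(r - 2) * β * n`, and `2 * l * n` bounds from below the
common neighbourhood of `r - 1` vertices, where `β = 1 / r + 1 / r ^ 4`. The growth steps need
`D * (l * E) ≥ 2`; the last inequality keeps the loss in the final step within
`exp (r ^ 3 * s)`. -/
theorem exists_numeric_constant {r : ℕ} (hr : 2 ≤ r) {E l : ℝ}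
    (hE : E = ((r : ℝ) ^ 3 - r ^ 2 + 2 * r + 2) / (r ^ 5 * (r + 1)))
    (hl : 2 * l = 1 - (r - 1) * (1 / (r : ℝ) + 1 / (r : ℝ) ^ 4)) :
    0 < E ∧ E ≤ 1 ∧ 0 < l ∧ l ≤ 1 ∧ ∃ D : ℕ, 2 ≤ D * (l * E) ∧ D ≤ r ^ 8 ∧
      (D : ℝ) ^ 3 * Real.exp 1 ^ 2 ≤ Real.exp 1 ^ (2 * r ^ 3) := by
  have hr' : (2 : ℝ) ≤ r := by exact_mod_cast hr
  have hr0 : (0 : ℝ) < r := by linarith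
  have hE1 : 1 / (2 * (r : ℝ) ^ 3) ≤ E := by
    rw [hE, div_le_div_iff₀ (by positivity) (by positivity)]
    have : (0 : ℝ) ≤ r ^ 3 * (r ^ 3 - 3 * r ^ 2 + 4 * r + 4) := by
      refine mul_nonneg (by positivity) ?_
      nlinarith [mul_nonneg hr0.le (sq_nonneg ((r : ℝ) - 3 / 2))]
    nlinarith
  have hE2 : E ≤ 1 := by
    rw [hE, div_le_one (by positivity)]
    have h2 : (4 : ℝ) ≤ r ^ 2 := by nlinarith
    have h3 : (8 : ℝ) ≤ r ^ 3 := by nlinarith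
    have h5 : 4 * (r : ℝ) ^ 3 ≤ r ^ 5 := by nlinarith
    nlinarith
  have hl' : l = ((r : ℝ) ^ 3 - r + 1) / (2 * r ^ 4) := by
    have : 2 * l = ((r : ℝ) ^ 3 - r + 1) / r ^ 4 := by
      rw [hl]; field_simp; ring
    have h2 : l = (2 * l) / 2 := by ring
    rw [h2, this]; field_simp
  have hl1 : 3 / (8 * (r : ℝ)) ≤ l := by
    rw [hl', div_le_div_iff₀ (by positivity) (by positivity)]
    have : (0 : ℝ) ≤ r * (r ^ 3 - 4 * r + 4) := by
      refine mul_nonneg hr0.le ?_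
      nlinarith [mul_nonneg hr0.le (sub_nonneg.2 hr')]
    nlinarith
  have hl2 : l ≤ 1 := by
    have : 0 ≤ ((r : ℝ) - 1) * (1 / (r : ℝ) + 1 / (r : ℝ) ^ 4) :=
      mul_nonneg (by linarith) (by positivity)
    linarith
  refine ⟨lt_of_lt_of_le (by positivity) hE1, hE2, lt_of_lt_of_le (by positivity) hl1, hl2, ?_⟩
  have he : (2 : ℝ) ≤ Real.exp 1 := by linarith [Real.exp_one_gt_d9]
  -- For `r = 2` the estimate `D ^ 3 * e ^ 2 ≤ e ^ (2 * r ^ 3)` forces `D ≤ 106`, which the uniform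
  -- choice `16 * r ^ 4` violates; the exact values `l = 7 / 32` and `E = 5 / 48` allow `D = 100`.
  rcases Nat.lt_or_ge 2 r with h3 | h3
  · refine ⟨16 * r ^ 4, ?_, ?_, ?_⟩
    · have h : 3 / (8 * (r : ℝ)) * (1 / (2 * (r : ℝ) ^ 3)) ≤ l * E :=
        mul_le_mul hl1 hE1 (by positivity) (le_trans (by positivity) hl1)
      have h' : (16 * (r : ℝ) ^ 4) * (3 / (8 * (r : ℝ)) * (1 / (2 * (r : ℝ) ^ 3))) = 3 := by
        field_simp; norm_num
      have h'' := mul_le_mul_of_nonneg_left h (show 0 ≤ (16 * (r : ℝ) ^ 4) by positivity)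
      push_cast
      linarith
    · have : 3 ^ 4 ≤ r ^ 4 := Nat.pow_le_pow_left h3 4
      calc 16 * r ^ 4 ≤ r ^ 4 * r ^ 4 := Nat.mul_le_mul_right _ (by omega)
        _ = r ^ 8 := by ring
    · have h1 : 2 * r ^ 3 = (2 * r ^ 3 - 2) + 2 := by
        have : 1 ≤ r ^ 3 := Nat.one_le_pow _ _ (by omega)
        omega
      rw [h1, pow_add]
      refine mul_le_mul_of_nonneg_right ?_ (by positivity)
      have h2 : 12 + 12 * r ≤ 2 * r ^ 3 - 2 := by
        have : 9 * r ≤ r ^ 3 := by nlinarith [Nat.mul_le_mul h3 h3]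
        omega
      have h4 : (r : ℝ) ≤ 2 ^ r := by exact_mod_cast (Nat.lt_two_pow_self (n := r)).le
      calc (((16 * r ^ 4 : ℕ) : ℝ)) ^ 3 = 2 ^ 12 * (r : ℝ) ^ 12 := by push_cast; ring
        _ ≤ 2 ^ 12 * (2 ^ r) ^ 12 := by gcongr
        _ = 2 ^ (12 + 12 * r) := by rw [pow_add, ← pow_mul, mul_comm r]
        _ ≤ 2 ^ (2 * r ^ 3 - 2) := pow_le_pow_right₀ (by norm_num) h2
        _ ≤ _ := by gcongr
  · obtain rfl : r = 2 := by omega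
    refine ⟨100, ?_, by norm_num, ?_⟩
    · rw [hl', hE]; norm_num
    · have : (2.7 : ℝ) ≤ Real.exp 1 := by linarith [Real.exp_one_gt_d9]
      have h14 : (100 : ℝ) ^ 3 ≤ Real.exp 1 ^ 14 := by
        refine le_trans ?_ (pow_le_pow_left₀ (by norm_num) this 14)
        norm_num
      calc _ ≤ Real.exp 1 ^ 14 * Real.exp 1 ^ 2 := by push_cast; gcongr
        _ = _ := by rw [← pow_add]; norm_num

/-- The loss in the last pigeonhole step: `C(D * s, s) ≤ (e * D) ^ s`, and the extra factor `D` is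
at most `D ^ (s / 2)`. -/
theorem mul_choose_le_exp {D s R : ℕ} (hD : 0 < D) (hs : 2 ≤ s)
    (h : (D : ℝ) ^ 3 * Real.exp 1 ^ 2 ≤ Real.exp 1 ^ (2 * R)) :
    (D * (D * s).choose s : ℝ) ≤ Real.exp (R * s) := by
  have hD1 : (1 : ℝ) ≤ D := by exact_mod_cast hD
  have h1 : ((D * s).choose s : ℝ) ≤ (D * Real.exp 1) ^ s := by
    have h2 : ((D * s).choose s : ℝ) ≤ ((D * s : ℕ) : ℝ) ^ s / (s.factorial : ℝ) :=
      Nat.choose_le_pow_div s (D * s)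
    refine h2.trans ?_
    have h3 : (s : ℝ) ^ s / s.factorial ≤ Real.exp s :=
      Real.pow_div_factorial_le_exp _ (by positivity) s
    rw [mul_pow, ← Real.exp_nat_mul, mul_one]
    push_cast
    rw [mul_pow, mul_div_assoc]
    gcongr
  have h4 : (D : ℝ) ^ 2 ≤ (D : ℝ) ^ s := pow_le_pow_right₀ hD1 hs
  refine le_of_sq_le_sq ?_ (Real.exp_pos _).le
  calc (D * (D * s).choose s : ℝ) ^ 2 ≤ (D * (D * Real.exp 1) ^ s) ^ 2 := by gcongr
    _ = (D : ℝ) ^ 2 * ((D * Real.exp 1) ^ s) ^ 2 := by ring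
    _ ≤ (D : ℝ) ^ s * ((D * Real.exp 1) ^ s) ^ 2 := by gcongr
    _ = ((D : ℝ) ^ 3 * Real.exp 1 ^ 2) ^ s := by ring
    _ ≤ (Real.exp 1 ^ (2 * R)) ^ s := by gcongr
    _ = Real.exp (R * s) ^ 2 := by
        rw [← Real.exp_nat_mul, ← Real.exp_nat_mul, ← Real.exp_nat_mul]
        push_cast; ring_nf

theorem four_pow_le {r D s n : ℕ} (hr : 2 ≤ r) {c : ℝ} (hn : 0 < n)
    (hc : c ≤ ((r : ℝ) ^ ((r + 8) * r))⁻¹) (hD : D ≤ r ^ 8)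
    (hs : (s : ℝ) ≤ c * Real.log n) : 4 ^ (D ^ r * s) ≤ n := by
  have hn' : (0 : ℝ) < n := by exact_mod_cast hn
  have hr2 : (2 : ℝ) ≤ r := by exact_mod_cast hr
  have hD' : (D : ℝ) ^ r ≤ (r : ℝ) ^ (8 * r) := by
    rw [pow_mul]
    have : (D : ℝ) ≤ (r : ℝ) ^ 8 := by exact_mod_cast hD
    gcongr
  have h2 : (2 : ℝ) ≤ (r : ℝ) ^ (r * r) :=
    hr2.trans (le_self_pow₀ (by linarith) (by positivity))
  have h1 : (D : ℝ) ^ r * s * 2 ≤ Real.log n := by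
    calc (D : ℝ) ^ r * s * 2 ≤ (r : ℝ) ^ (8 * r) * (c * Real.log n) * (r : ℝ) ^ (r * r) := by
          gcongr
          exact mul_nonneg (by positivity) ((Nat.cast_nonneg s).trans hs)
      _ ≤ (r : ℝ) ^ (8 * r) * (((r : ℝ) ^ ((r + 8) * r))⁻¹ * Real.log n) * (r : ℝ) ^ (r * r) := by
          gcongr
      _ = Real.log n := by
          have : (r : ℝ) ^ ((r + 8) * r) = (r : ℝ) ^ (8 * r) * (r : ℝ) ^ (r * r) := by
            rw [← pow_add]; ring_nf
          rw [this]
          have : (r : ℝ) ≠ 0 := by linarith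
          field_simp
  have h4 : (4 : ℝ) ≤ Real.exp 1 ^ 2 := by nlinarith [Real.exp_one_gt_d9]
  have : (4 : ℝ) ^ (D ^ r * s) ≤ n := by
    calc (4 : ℝ) ^ (D ^ r * s) ≤ (Real.exp 1 ^ 2) ^ (D ^ r * s) := by gcongr
      _ = Real.exp (D ^ r * s * 2) := by
          rw [← pow_mul, ← Real.exp_nat_mul]; push_cast; ring_nf
      _ ≤ Real.exp (Real.log n) := Real.exp_le_exp.2 h1
      _ = n := Real.exp_log hn'
  exact_mod_cast this

/-! ### Assembling the copy -/

/-- The vertices `u` and `v` replace vertices of the part `0` (unless they already lie in it), and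
`T` is cut down to the last part. Disjointness of the parts follows from their adjacency. -/
theorem SimpleGraph.IsBlowup.containsKPartitePlus {V : Type*} {G : SimpleGraph V} {r s t : ℕ}
    (hr : 2 ≤ r) (hs : 2 ≤ s) {q : Fin s → ℕ → V} (hq : G.IsBlowup q (Finset.range (r - 1)))
    {u v : V} (huv : G.Adj u v) {T : Finset V} (ht : t ≤ T.card)
    (hT : ∀ x ∈ T, G.Adj x u ∧ G.Adj x v)
    (hqu : ∀ i ∈ Finset.range (r - 1), i ≠ 0 → ∀ j, G.Adj (q j i) u ∧ G.Adj (q j i) v)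
    (hTq : ∀ x ∈ T, ∀ j, ∀ i ∈ Finset.range (r - 1), G.Adj x (q j i)) :
    G.ContainsKPartitePlus (fun i : Fin r => if (i : ℕ) < r - 1 then s else t)
      ⟨0, by omega⟩ := by
  classical
  have h0 : 0 ∈ Finset.range (r - 1) := by simp; omega
  obtain ⟨T', hT', hT'c⟩ := Finset.exists_subset_card_eq ht
  let Q : ℕ → Finset V := fun i => Finset.univ.image fun j => q j i
  have hQc : ∀ i ∈ Finset.range (r - 1), (Q i).card = s := fun i hi => by
    simp [Q, Finset.card_image_of_injective _ (hq.1 i hi)]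
  obtain ⟨P, hP1, hP2, hPc⟩ := Finset.exists_subsuperset_card_eq
    (Finset.subset_union_left (s₁ := {u, v}) (s₂ := Q 0)) (n := s)
    ((Finset.card_le_two).trans hs)
    ((hQc 0 h0).ge.trans (Finset.card_le_card Finset.subset_union_right))
  have hPmem : ∀ x ∈ P, x = u ∨ x = v ∨ ∃ j, q j 0 = x := fun x hx => by
    have := hP2 hx
    simpa [Q, or_assoc] using this
  let A : Fin r → Finset V := fun i =>
    if (i : ℕ) = 0 then P else if (i : ℕ) < r - 1 then Q i else T'
  have hadj : ∀ i j : Fin r, i < j → ∀ x ∈ A i, ∀ y ∈ A j, G.Adj x y := by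
    intro i j hij x hx y hy
    have hij' : (i : ℕ) < j := hij
    have hjr := j.2
    have hj0 : (j : ℕ) ≠ 0 := by omega
    have hir : (i : ℕ) ∈ Finset.range (r - 1) := by simp; omega
    simp only [A, hj0, if_false] at hy
    by_cases hi0 : (i : ℕ) = 0
    · simp only [A, hi0, if_true] at hx
      have hx' := hPmem x hx
      split_ifs at hy with hj
      · have hjr' : (j : ℕ) ∈ Finset.range (r - 1) := by simpa using hj
        obtain ⟨b, -, rfl⟩ := Finset.mem_image.1 hy
        rcases hx' with rfl | rfl | ⟨a, rfl⟩
        · exact (hqu _ hjr' hj0 b).1.symm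
        · exact (hqu _ hjr' hj0 b).2.symm
        · exact hq.2 0 h0 _ hjr' (Ne.symm hj0) a b
      · rcases hx' with rfl | rfl | ⟨a, rfl⟩
        · exact (hT y (hT' hy)).1.symm
        · exact (hT y (hT' hy)).2.symm
        · exact (hTq y (hT' hy) a 0 h0).symm
    · have hi1 : (i : ℕ) < r - 1 := by omega
      simp only [A, hi0, hi1, if_true, if_false] at hx
      obtain ⟨a, -, rfl⟩ := Finset.mem_image.1 hx
      split_ifs at hy with hj
      · obtain ⟨b, -, rfl⟩ := Finset.mem_image.1 hy
        exact hq.2 _ hir _ (by simpa using hj) hij'.ne a b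
      · exact (hTq y (hT' hy) a _ hir).symm
  have hadj' : ∀ i j : Fin r, i ≠ j → ∀ x ∈ A i, ∀ y ∈ A j, G.Adj x y := by
    intro i j hij x hx y hy
    rcases lt_or_gt_of_ne hij with h | h
    · exact hadj i j h x hx y hy
    · exact (hadj j i h y hy x hx).symm
  refine ⟨A, fun i j hij => ?_, fun i => ?_, hadj', u, ?_, v, ?_, huv.ne, huv⟩
  · refine Finset.disjoint_left.2 ?_
    exact fun x hx hx' => G.irrefl (hadj' i j hij x hx x hx')
  · have hi := i.2
    by_cases hi0 : (i : ℕ) = 0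
    · have : 0 < r - 1 := by omega
      simp [A, hi0, this, hPc]
    · by_cases hi1 : (i : ℕ) < r - 1
      · simp [A, hi0, hi1, hQc i (by simpa using hi1)]
      · simp [A, hi0, hi1, hT'c]
  · simpa [A] using hP1 (by simp)
  · simpa [A] using hP1 (by simp)

/-- Let `r ≥ 2`, `2/ln n ≤ c ≤ r^(-(r+8)r)`, and `G` a graph of order `n`. If `G`
contains a clique of order `r + 1` and `δ(G) > (1 - 1/r - 1/r⁴)n`, then `G` contains a
copy of `K_r^+(⌊c ln n⌋, …, ⌊c ln n⌋, ⌈n^(1 - cr³)⌉)`. -/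
theorem KrPlus_of_min_degree {V : Type*} [Fintype V] [DecidableEq V] (r n : ℕ)
    (hr : 2 ≤ r) (c : ℝ) (hc1 : 2 / Real.log n ≤ c)
    (hc2 : c ≤ ((r : ℝ) ^ ((r + 8) * r))⁻¹)
    (G : SimpleGraph V) (hcard : Fintype.card V = n)
    (hclique : ∃ t : Finset V, G.IsNClique (r + 1) t)
    (hδ : (1 - 1 / (r : ℝ) - 1 / (r : ℝ) ^ 4) * n < (G.minDeg : ℝ)) :
    G.ContainsKPartitePlus
      (fun i : Fin r => if (i : ℕ) < r - 1 then ⌊c * Real.log n⌋₊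
        else ⌈(n : ℝ) ^ (1 - c * (r : ℝ) ^ 3)⌉₊)
      ⟨0, by omega⟩ := by
  classical
  have hn3 : r + 1 ≤ n := by
    obtain ⟨K, hK⟩ := hclique
    rw [← hcard, ← hK.card_eq]; exact Finset.card_le_univ K
  have hn0 : 0 < n := by omega
  have hnR : (0 : ℝ) < n := by exact_mod_cast hn0
  have hr2 : (2 : ℝ) ≤ r := by exact_mod_cast hr
  have hrpos : (0 : ℝ) < r := by linarith
  have hlog : 0 < Real.log n := Real.log_pos (by exact_mod_cast (by omega : 1 < n))
  have hcl : 2 ≤ c * Real.log n := (div_le_iff₀ hlog).1 hc1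
  set s := ⌊c * Real.log n⌋₊ with hsdef
  have hs2 : 2 ≤ s := Nat.le_floor (by exact_mod_cast hcl)
  have hsle : (s : ℝ) ≤ c * Real.log n := Nat.floor_le (by linarith)
  set β : ℝ := 1 / (r : ℝ) + 1 / (r : ℝ) ^ 4 with hβ
  obtain ⟨E, hE⟩ : ∃ E, E = ((r : ℝ) ^ 3 - r ^ 2 + 2 * r + 2) / (r ^ 5 * (r + 1)) := ⟨_, rfl⟩
  obtain ⟨l, hl⟩ : ∃ l, 2 * l = 1 - (r - 1) * β := ⟨(1 - (r - 1) * β) / 2, by ring⟩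
  obtain ⟨hE0, hE1, hl0, hl1, D, hD, hDr, hDe⟩ := exists_numeric_constant hr hE hl
  have hB : ∀ v, ((Finset.univ.filter fun x => ¬ G.Adj x v).card : ℝ) ≤ β * n := by
    intro v
    have h1 : G.minDeg ≤ (Finset.univ.filter fun x => G.Adj x v).card := by
      unfold SimpleGraph.minDeg
      refine (G.minDegree_le_degree v).trans (le_of_eq ?_)
      rw [← SimpleGraph.card_neighborFinset_eq_degree]
      congr 1
      ext x
      simp [G.adj_comm]
    have h3 := Finset.card_filter_add_card_filter_not (s := (Finset.univ : Finset V))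
      (fun x => G.Adj x v)
    rw [Finset.card_univ, hcard] at h3
    have h4 : ((Finset.univ.filter fun x => G.Adj x v).card : ℝ) +
      (Finset.univ.filter fun x => ¬ G.Adj x v).card = n := by exact_mod_cast h3
    have h5 : (G.minDeg : ℝ) ≤ (Finset.univ.filter fun x => G.Adj x v).card := by
      exact_mod_cast h1
    have h6 : β * n = n - (1 - 1 / (r : ℝ) - 1 / (r : ℝ) ^ 4) * n := by rw [hβ]; ring
    linarith
  obtain ⟨K, hK⟩ := hclique
  obtain ⟨u, v, huv, hW⟩ := G.exists_edge_codegree hB hr hK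
  set W := Finset.univ.filter fun x => G.Adj x u ∧ G.Adj x v with hWdef
  have hWmem : ∀ x ∈ W, G.Adj x u ∧ G.Adj x v := fun x hx => by simpa [hWdef] using hx
  have hW' : (r - 2) * (β * n) + E * n ≤ W.card := by
    rw [hcard] at hW
    have h1 : (r * (r + 1) : ℝ) * ((r - 2) * (β * n) + E * n)
        = 2 * (r - 1) * (r + 1) * (n - β * n) - r * (r - 1) * n := by
      rw [hE, hβ]; field_simp; ring
    rw [← h1] at hW
    exact le_of_mul_le_mul_left hW (by positivity)
  have hlE : 0 < l * E := mul_pos hl0 hE0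
  obtain ⟨q, T, hq, hqW, hTW, hTq, hTc⟩ := G.exists_blowup hB hr (by omega : 0 < s) (E := E * n)
    (l := l * n) hlE hD hW' (by rw [hcard]; linear_combination (n : ℝ) * hl)
    (by positivity)
    (by rw [hcard]; nlinarith [mul_pos hE0 hnR])
    (by rw [hcard]; nlinarith [mul_pos hl0 hnR])
    (by rw [hcard]; exact le_of_eq (by ring))
    (by rw [hcard]; exact four_pow_le hr hn0 hc2 hDr hsle)
  have hDpos : 0 < D := by
    rcases Nat.eq_zero_or_pos D with h | h
    · subst h; norm_num at hD
    · exact h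
  refine hq.containsKPartitePlus hr hs2 huv (T := T) ?_ (fun x hx => hWmem x (hTW hx))
    (fun i hi hi0 j => hWmem _ (hqW i hi hi0 j)) hTq
  rw [Nat.ceil_le]
  have h1 : (n : ℝ) ≤ D * (D * s).choose s * T.card := by
    rw [hcard] at hTc; exact_mod_cast hTc
  have h2 := mul_choose_le_exp hDpos hs2 hDe
  have h3 : Real.exp (((r ^ 3 : ℕ) : ℝ) * s) ≤ Real.exp (Real.log n * (c * r ^ 3)) := by
    refine Real.exp_le_exp.2 ?_
    push_cast
    nlinarith [mul_le_mul_of_nonneg_left hsle (show (0 : ℝ) ≤ (r : ℝ) ^ 3 by positivity)]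
  rw [Real.rpow_sub hnR, Real.rpow_one, Real.rpow_def_of_pos hnR, div_le_iff₀ (Real.exp_pos _)]
  calc (n : ℝ) ≤ D * (D * s).choose s * T.card := h1
    _ ≤ Real.exp (Real.log n * (c * r ^ 3)) * T.card := by
        gcongr
        exact h2.trans h3
    _ = _ := mul_comm _ _
end

section
/- Let r ≥ 1 and let G be a graph of order n. If e(G) > e(T_r(n)), then μ(G) > μ(T_r(n)). -/
/-- The number of edges of a finite simple graph. -/
noncomputable def SimpleGraph.edgeCount {V : Type*} [Fintype V] [DecidableEq V]
    (G : SimpleGraph V) : ℕ :=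
  letI := Classical.decRel G.Adj
  G.edgeFinset.card

open Finset Matrix

/-- The Rayleigh quotient of a real symmetric matrix is at most its largest eigenvalue. -/
lemma rayleigh_le_iSup_eigenvalues {V : Type*} [Fintype V] [DecidableEq V]
    {A : Matrix V V ℝ} (hA : A.IsHermitian) (v : V → ℝ) :
    v ⬝ᵥ A *ᵥ v ≤ (⨆ i, hA.eigenvalues i) * (v ⬝ᵥ v) := by
  set b := hA.eigenvectorBasis
  have key : ∀ u z : V → ℝ, u ⬝ᵥ z = ∑ i, (u ⬝ᵥ ⇑(b i)) * (⇑(b i) ⬝ᵥ z) := by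
    intro u z
    have := b.sum_inner_mul_inner (WithLp.toLp 2 u) (WithLp.toLp 2 z)
    simp only [EuclideanSpace.inner_eq_star_dotProduct, star_trivial] at this
    rw [dotProduct_comm u z, ← this]
    refine Finset.sum_congr rfl fun i _ => ?_
    rw [dotProduct_comm u, dotProduct_comm _ z]
  have hT : Aᵀ = A := by
    rw [← conjTranspose_eq_transpose_of_trivial]; exact hA
  rw [key v (A *ᵥ v), key v v, Finset.mul_sum]
  refine Finset.sum_le_sum fun i _ => ?_
  have h1 : ⇑(b i) ⬝ᵥ A *ᵥ v = hA.eigenvalues i * (⇑(b i) ⬝ᵥ v) := by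
    have h2 : A *ᵥ ⇑(b i) = hA.eigenvalues i • ⇑(b i) := hA.mulVec_eigenvectorBasis i
    rw [dotProduct_mulVec, ← mulVec_transpose, hT, h2, smul_dotProduct, smul_eq_mul]
  have h3 : hA.eigenvalues i ≤ ⨆ i, hA.eigenvalues i :=
    le_ciSup (Set.finite_range hA.eigenvalues).bddAbove i
  rw [h1, dotProduct_comm v]
  nlinarith [mul_le_mul_of_nonneg_right h3 (mul_self_nonneg (⇑(b i) ⬝ᵥ v))]

/-- Collatz–Wielandt bound: a positive vector `w` with `A w < x w` entrywise forces every
eigenvalue of an entrywise nonnegative symmetric matrix `A` to be less than `x`. -/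
lemma eigenvalues_lt_of_mulVec_lt {V : Type*} [Fintype V] [DecidableEq V]
    {A : Matrix V V ℝ} (hA : A.IsHermitian) (hpos : ∀ i j, 0 ≤ A i j) {w : V → ℝ} {x : ℝ}
    (hw : ∀ i, 0 < w i) (h : ∀ i, (A *ᵥ w) i < x * w i) (k : V) : hA.eigenvalues k < x := by
  set v : V → ℝ := ⇑(hA.eigenvectorBasis k)
  have hv : A *ᵥ v = hA.eigenvalues k • v := hA.mulVec_eigenvectorBasis k
  have hv0 : ∃ j, v j ≠ 0 := by
    by_contra! h0
    exact hA.eigenvectorBasis.orthonormal.ne_zero k (by ext j; simpa using h0 j)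
  -- The coordinate where `|v| / w` is largest.
  obtain ⟨i, -, hi⟩ := Finset.exists_max_image univ (fun j => |v j| / w j) ⟨k, mem_univ k⟩
  set c := |v i| / w i
  have hle : ∀ j, |v j| ≤ c * w j := fun j => (div_le_iff₀ (hw j)).1 (hi j (mem_univ j))
  have hci : |v i| = c * w i := (div_mul_cancel₀ _ (hw i).ne').symm
  have hc : 0 < c := by
    obtain ⟨j, hj⟩ := hv0
    exact (div_pos (abs_pos.2 hj) (hw j)).trans_le (hi j (mem_univ j))
  have h1 : hA.eigenvalues k * |v i| ≤ c * (A *ᵥ w) i := by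
    calc hA.eigenvalues k * |v i| ≤ |hA.eigenvalues k * v i| := by
          rw [abs_mul]
          exact mul_le_mul_of_nonneg_right (le_abs_self _) (abs_nonneg _)
      _ = |(A *ᵥ v) i| := by rw [hv]; simp
      _ ≤ ∑ j, |A i j * v j| := Finset.abs_sum_le_sum_abs _ _
      _ ≤ ∑ j, c * (A i j * w j) := by
          refine Finset.sum_le_sum fun j _ => ?_
          rw [abs_mul, abs_of_nonneg (hpos i j)]
          nlinarith [mul_le_mul_of_nonneg_left (hle j) (hpos i j)]
      _ = c * (A *ᵥ w) i := by rw [← Finset.mul_sum]; rfl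
  have h2 : c * (A *ᵥ w) i < c * (x * w i) := mul_lt_mul_of_pos_left (h i) hc
  rw [hci] at h1
  have h3 : 0 < c * w i := mul_pos hc (hw i)
  nlinarith

/-- The largest eigenvalue is at least the average degree. -/
lemma two_mul_edgeCount_le_specMax_mul {V : Type*} [Fintype V] [DecidableEq V]
    (G : SimpleGraph V) : 2 * (G.edgeCount : ℝ) ≤ G.specMax * Fintype.card V := by
  let := Classical.decRel G.Adj
  have h := rayleigh_le_iSup_eigenvalues (A := G.adjMatrix ℝ)
    (by rw [Matrix.IsHermitian, Matrix.conjTranspose_eq_transpose_of_trivial]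
        exact SimpleGraph.isSymm_adjMatrix G) (fun _ => 1)
  have h1 : (fun _ => (1 : ℝ)) ⬝ᵥ G.adjMatrix ℝ *ᵥ (fun _ => 1) = 2 * (G.edgeCount : ℝ) := by
    have := G.sum_degrees_eq_twice_card_edges
    simp only [dotProduct, SimpleGraph.adjMatrix_mulVec_apply, one_mul, sum_const, nsmul_eq_mul,
      mul_one, SimpleGraph.card_neighborFinset_eq_degree]
    exact_mod_cast this
  have h2 : (fun _ : V => (1 : ℝ)) ⬝ᵥ (fun _ => 1) = Fintype.card V := by simp [dotProduct]
  rw [h1, h2] at h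
  exact h

/-- The Collatz–Wielandt bound for the adjacency matrix of a graph. -/
lemma specMax_lt_of_sum_lt {V : Type*} [Fintype V] [DecidableEq V] [Nonempty V]
    (G : SimpleGraph V) [inst : DecidableRel G.Adj] {w : V → ℝ} {x : ℝ} (hw : ∀ i, 0 < w i)
    (h : ∀ i, ∑ j ∈ G.neighborFinset i, w j < x * w i) : G.specMax < x := by
  unfold SimpleGraph.specMax
  -- `specMax` is built on the classical decidability instance.
  obtain rfl : inst = Classical.decRel G.Adj := Subsingleton.elim _ _
  let := Classical.decRel G.Adj
  obtain ⟨k, hk⟩ := exists_eq_ciSup_of_finite (f := Matrix.IsHermitian.eigenvalues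
    (A := G.adjMatrix ℝ)
    (by rw [Matrix.IsHermitian, Matrix.conjTranspose_eq_transpose_of_trivial]
        exact SimpleGraph.isSymm_adjMatrix G))
  rw [← hk]
  refine eigenvalues_lt_of_mulVec_lt _ (fun i j => ?_) hw (fun i => ?_) k
  · rw [SimpleGraph.adjMatrix_apply]; split_ifs <;> norm_num
  · rw [SimpleGraph.adjMatrix_mulVec_apply]; exact h i

/-- The parts of `T_r(n)` have size `n / r` or `n / r + 1`. -/
lemma card_turan_part {n r : ℕ} (hr : 1 ≤ r) (i : Fin n) :
    #{j : Fin n | j % r = i % r} = n / r ∨ #{j : Fin n | j % r = i % r} = n / r + 1 := by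
  have h : #{j : Fin n | j % r = i % r} = n.count (· ≡ i [MOD r]) := by
    rw [Nat.count_eq_card_filter_range, Finset.card_filter, Finset.card_filter,
      ← Fin.sum_univ_eq_sum_range fun j => if j ≡ i [MOD r] then 1 else 0]
    rfl
  rw [h, Nat.count_modEq_card _ hr]
  split_ifs <;> simp

/-- The largest eigenvalue of `T_r(n)` is less than the average degree of a graph of order `n` with
one more edge than `T_r(n)`. -/
lemma turan_specMax_lt {n r : ℕ} (hr : 1 ≤ r) (hn : 0 < n) :
    (SimpleGraph.turanGraph n r).specMax <
      (2 * (SimpleGraph.turanGraph n r).edgeCount + 2) / n := by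
  have : Nonempty (Fin n) := ⟨⟨0, hn⟩⟩
  set T := SimpleGraph.turanGraph n r
  set x : ℝ := (2 * T.edgeCount + 2) / n
  set q : ℝ := ((n / r : ℕ) : ℝ)
  let P : Fin n → Finset (Fin n) := fun i => {j | j % r = i % r}
  have hnR : (0 : ℝ) < n := by exact_mod_cast hn
  have hx : 0 < x := by positivity
  have hq : 0 ≤ q := Nat.cast_nonneg _
  have hxn : n * x = 2 * T.edgeCount + 2 := mul_div_cancel₀ _ hnR.ne'
  have hm : ∀ i, (#(P i) : ℝ) = q ∨ (#(P i) : ℝ) = q + 1 := fun i =>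
    (card_turan_part hr i).imp (fun h => congrArg Nat.cast h)
      fun h => (congrArg Nat.cast h).trans (Nat.cast_succ _)
  have hcompl : ∀ i, T.neighborFinset i = (P i)ᶜ := by
    intro i
    ext j
    simp [T, P, SimpleGraph.turanGraph_adj, eq_comm]
  have hsum : ∑ i, (#(P i) : ℝ) = n * n - 2 * T.edgeCount := by
    have h1 : (∑ i, (T.degree i : ℝ)) = 2 * T.edgeCount := by
      have := T.sum_degrees_eq_twice_card_edges
      have h2 : T.edgeCount = #T.edgeFinset := by
        unfold SimpleGraph.edgeCount; congr!
      rw [h2]; exact_mod_cast this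
    have h3 : ∀ i, (T.degree i : ℝ) = n - #(P i) := by
      intro i
      have := Finset.card_add_card_compl (P i)
      rw [← hcompl, SimpleGraph.card_neighborFinset_eq_degree, Fintype.card_fin] at this
      have h4 : (#(P i) : ℝ) + T.degree i = n := by exact_mod_cast this
      linarith
    rw [← h1]
    simp [h3]
  set w : Fin n → ℝ := fun i => x + 2 * q + 1 - #(P i)
  have hw : ∀ i, 0 < w i := by
    intro i
    rcases hm i with h | h <;> simp only [w, h] <;> linarith
  have hprod : ∀ i, (x + #(P i)) * w i = (x + q) * (x + q + 1) := by
    intro i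
    rcases hm i with h | h <;> simp only [w, h] <;> ring
  have hwsum : ∑ i, w i < (x + q) * (x + q + 1) := by
    have : ∑ i, w i = n * (x + 2 * q + 1) - (n * n - 2 * T.edgeCount) := by
      simp only [w, Finset.sum_sub_distrib, hsum]
      simp
      ring
    rw [this]
    -- The square completes `y ^ 2 - (2 q + 1) * y` at `y = n - x`, up to a factor `4`.
    nlinarith [sq_nonneg (2 * (n - x) - (2 * q + 1))]
  refine specMax_lt_of_sum_lt T hw fun i => ?_
  have h1 : ∑ j ∈ P i, w j = #(P i) * w i := by
    rw [← nsmul_eq_mul, ← Finset.sum_const]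
    refine Finset.sum_congr rfl fun j hj => ?_
    have hj' : (j : ℕ) % r = i % r := by simpa [P] using hj
    simp only [w, P, hj']
  have h2 := Finset.sum_add_sum_compl (P i) w
  rw [hcompl]
  nlinarith [hprod i]

/-- Let `r ≥ 1` and `G` a graph of order `n`. If `e(G) > e(T_r(n))`, then
`μ(G) > μ(T_r(n))`. -/
theorem specMax_turan_of_edgeCount {V : Type*} [Fintype V] [DecidableEq V] (r n : ℕ)
    (hr : 1 ≤ r) (G : SimpleGraph V) (hcard : Fintype.card V = n)
    (he : (SimpleGraph.turanGraph n r).edgeCount < G.edgeCount) :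
    (SimpleGraph.turanGraph n r).specMax < G.specMax := by
  have hn : 0 < n := by
    rcases Nat.eq_zero_or_pos n with rfl | h
    · have := Fintype.card_eq_zero_iff.1 hcard
      -- A graph on no vertices has no edges, contradicting `he`.
      have h0 : G.edgeCount = 0 := Finset.card_eq_zero.2 (Finset.eq_empty_of_isEmpty _)
      omega
    · exact h
  have hnR : (0 : ℝ) < n := by exact_mod_cast hn
  refine (turan_specMax_lt hr hn).trans_le ?_
  rw [div_le_iff₀ hnR, ← hcard]
  refine le_trans ?_ (two_mul_edgeCount_le_specMax_mul G)
  have : ((SimpleGraph.turanGraph n r).edgeCount : ℝ) + 1 ≤ G.edgeCount := by exact_mod_cast he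
  rw [hcard]
  linarith
end
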